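/- Let P ⊂ ℝ^n be a smooth full-dimensional lattice polytope. Then cd(P) ≥ (n+3)/2 if and only if μ(P) = τ(P) = cd(P) and cd(P) > n/2 + 1. -/

import Mathlib

noncomputable section

open MeasureTheory Pointwise

/-- A point of `ℝ^n` is a lattice point if all its coordinates are integers. -/
def IsLatticePt {n : ℕ} (x : Fin n → ℝ) : Prop := ∀ i, ∃ z : ℤ, x i = (z : ℝ)

/-- A lattice polytope is the convex hull of a finite set of lattice points. -/
def IsLatticePolytope {n : ℕ} (P : Set (Fin n → ℝ)) : Prop :=
  ∃ V : Finset (Fin n → ℝ), (∀ v ∈ V, IsLatticePt v) ∧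
    P = convexHull ℝ (↑V : Set (Fin n → ℝ))

/-- A rational polytope is the convex hull of a finite set of rational points. -/
def IsRatPolytope {n : ℕ} (P : Set (Fin n → ℝ)) : Prop :=
  ∃ V : Finset (Fin n → ℝ), (∀ v ∈ V, ∀ i, ∃ q : ℚ, v i = (q : ℝ)) ∧
    P = convexHull ℝ (↑V : Set (Fin n → ℝ))

/-- The vertices `0, e_1, …, e_t` of the standard unimodular simplex `Δ_t ⊆ ℝ^t`. -/
def stdSimplexVert (t : ℕ) (k : Fin (t + 1)) : Fin t → ℝ :=
  fun j => if (k : ℕ) = (j : ℕ) + 1 then 1 else 0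

/-- The standard unimodular simplex `Δ_t = conv(0, e_1, …, e_t) ⊆ ℝ^t`. -/
def unimodSimplex (t : ℕ) : Set (Fin t → ℝ) := convexHull ℝ (Set.range (stdSimplexVert t))

/-- The interior of the dilate `s • P` contains a lattice point. -/
def HasInteriorLatticePt {n : ℕ} (P : Set (Fin n → ℝ)) (s : ℕ) : Prop :=
  ∃ x ∈ interior ((s : ℝ) • P), IsLatticePt x

/-- The codegree `cd(P)`: the least positive integer `t` such that the interior of `t • P`
contains a lattice point. -/
def codeg {n : ℕ} (P : Set (Fin n → ℝ)) : ℕ :=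
  sInf {t : ℕ | 0 < t ∧ HasInteriorLatticePt P t}

/-- Pairing of an integer vector with a real vector. -/
def iprod {n : ℕ} (a : Fin n → ℤ) (x : Fin n → ℝ) : ℝ := ∑ i, (a i : ℝ) * x i

/-- An integer vector is primitive if it is nonzero and its coordinates have no common
non-unit divisor. -/
def IsPrimitive {n : ℕ} (a : Fin n → ℤ) : Prop :=
  a ≠ 0 ∧ ∀ d : ℤ, (∀ i, d ∣ a i) → IsUnit d

/-- `(a, b)` is a facet inequality of `P ⊆ ℝ^n`: `a` is a primitive integer inner normal,
`b = min_{x ∈ P} ⟨a, x⟩`, and the corresponding face has dimension `n - 1`. -/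
def IsFacetIneq {n : ℕ} (P : Set (Fin n → ℝ)) (a : Fin n → ℤ) (b : ℝ) : Prop :=
  IsPrimitive a ∧ (∀ x ∈ P, b ≤ iprod a x) ∧
  {x ∈ P | iprod a x = b}.Nonempty ∧
  Module.finrank ℝ ↥(vectorSpan ℝ {x ∈ P | iprod a x = b}) = n - 1

/-- The adjoint polytope `P^(s) = {x : ⟨a_F, x⟩ ≥ b_F + s for all facets F}`. -/
def adjointPoly {n : ℕ} (P : Set (Fin n → ℝ)) (s : ℝ) : Set (Fin n → ℝ) :=
  {x | ∀ a b, IsFacetIneq P a b → b + s ≤ iprod a x}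

/-- The set `{s > 0 : P^(s) ≠ ∅}`; the ℚ-codegree is `μ(P) = (sSup (muSet P))⁻¹`. -/
def muSet {n : ℕ} (P : Set (Fin n → ℝ)) : Set ℝ :=
  {s : ℝ | 0 < s ∧ (adjointPoly P s).Nonempty}

/-- `F` is a (nonempty, exposed) face of the polytope `P`; with `u = 0` this includes
`P` itself. -/
def IsFace {n : ℕ} (P F : Set (Fin n → ℝ)) : Prop :=
  F.Nonempty ∧ ∃ (u : (Fin n → ℝ) →ₗ[ℝ] ℝ) (c : ℝ),
    (∀ x ∈ P, c ≤ u x) ∧ F = {x ∈ P | u x = c}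

/-- The dimension of a face (or polytope): the rank of its direction vector space. -/
def fdim {n : ℕ} (F : Set (Fin n → ℝ)) : ℕ := Module.finrank ℝ ↥(vectorSpan ℝ F)

/-- `vol` is the relative lattice volume of `F`: the Lebesgue volume of the image of `F`
under an affine isomorphism of `aff F` with `ℝ^{dim F}` carrying `(aff F) ∩ ℤ^n` onto
`ℤ^{dim F}`. -/
def HasRelVol {n : ℕ} (F : Set (Fin n → ℝ)) (vol : ℝ) : Prop :=
  ∃ T : (Fin n → ℝ) →ᵃ[ℝ] (Fin (fdim F) → ℝ),
    Set.BijOn T (affineSpan ℝ F : Set (Fin n → ℝ)) Set.univ ∧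
    T '' ((affineSpan ℝ F : Set (Fin n → ℝ)) ∩ {x | IsLatticePt x}) = {y | IsLatticePt y} ∧
    vol = (volume (T '' F)).toReal

/-- The alternating face sum `Σ_F (-1)^{n - dim F} (dim F + 1)! Vol(F)`. -/
def faceSum {n : ℕ} (𝓕 : Finset (Set (Fin n → ℝ))) (volf : Set (Fin n → ℝ) → ℝ) : ℝ :=
  ∑ F ∈ 𝓕, (-1 : ℝ) ^ (n - fdim F) * (Nat.factorial (fdim F + 1) : ℝ) * volf F

/-- The alternating sum over all nonempty faces of `P` of
`(-1)^{n - dim F} (dim F + 1)! Vol(F)` vanishes. -/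
def FaceSumZero {n : ℕ} (P : Set (Fin n → ℝ)) : Prop :=
  ∃ (𝓕 : Finset (Set (Fin n → ℝ))) (volf : Set (Fin n → ℝ) → ℝ),
    (∀ F, F ∈ 𝓕 ↔ IsFace P F) ∧ (∀ F ∈ 𝓕, HasRelVol F (volf F)) ∧
    faceSum 𝓕 volf = 0

/-- A polytope `R ⊆ ℝ^n` (of dimension `d = fdim R`) is smooth: at each vertex there are
exactly `d` edges, whose primitive integer direction vectors form a ℤ-basis of the
lattice `(vectorSpan R) ∩ ℤ^n`. -/
def IsSmoothPoly {n : ℕ} (R : Set (Fin n → ℝ)) : Prop :=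
  ∀ v ∈ Set.extremePoints ℝ R,
    ∃ (w : Fin (fdim R) → (Fin n → ℤ)) (c : Fin (fdim R) → ℝ),
      (∀ i, 0 < c i) ∧ (∀ i, IsPrimitive (w i)) ∧
      LinearIndependent ℝ (fun i => ((fun j => ((w i j : ℝ))) : Fin n → ℝ)) ∧
      (∀ i, ((fun j => ((w i j : ℝ))) : Fin n → ℝ) ∈ vectorSpan ℝ R) ∧
      (∀ z : Fin n → ℤ, ((fun j => (z j : ℝ)) : Fin n → ℝ) ∈ vectorSpan ℝ R →
        ∃ m : Fin (fdim R) → ℤ,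
          ((fun j => (z j : ℝ)) : Fin n → ℝ) =
            ∑ i, (m i : ℝ) • ((fun j => ((w i j : ℝ))) : Fin n → ℝ)) ∧
      (∀ F : Set (Fin n → ℝ), (IsFace R F ∧ v ∈ F ∧ fdim F = 1) ↔
        ∃ i, F = segment ℝ v (v + c i • ((fun j => ((w i j : ℝ))) : Fin n → ℝ)))

/-- The real-linear map `ℝ^n → ℝ^t` induced by an integer matrix. -/
def matMap {t n : ℕ} (A : Matrix (Fin t) (Fin n) ℤ) : (Fin n → ℝ) → (Fin t → ℝ) :=
  fun x k => ∑ j, (A k j : ℝ) * x j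

/-- The piece `R_k = P ∩ π_ℝ^{-1}(v_k)` of a Cayley sum over the `k`-th vertex of `Δ_t`. -/
def cayleyPiece {t n : ℕ} (A : Matrix (Fin t) (Fin n) ℤ) (P : Set (Fin n → ℝ))
    (k : Fin (t + 1)) : Set (Fin n → ℝ) :=
  {x ∈ P | matMap A x = stdSimplexVert t k}

/-- Two polytopes are normally equivalent (have the same normal fan): for all linear
functionals `u, v`, the minimizing face of `u` equals that of `v` on `R` precisely when the
same holds on `S`. -/
def NormEquiv {n : ℕ} (R S : Set (Fin n → ℝ)) : Prop :=
  ∀ u v : (Fin n → ℝ) →ₗ[ℝ] ℝ,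
    ({x ∈ R | ∀ y ∈ R, u x ≤ u y} = {x ∈ R | ∀ y ∈ R, v x ≤ v y}) ↔
    ({x ∈ S | ∀ y ∈ S, u x ≤ u y} = {x ∈ S | ∀ y ∈ S, v x ≤ v y})

/-- `Q` is the Cayley sum, via the surjective lattice projection `A : ℤ^n → ℤ^t`, of the
normally equivalent polytopes `R_k = Q ∩ π_ℝ^{-1}(v_k)`: `π_ℝ` maps `Q` onto `Δ_t`. -/
def IsCayleyWith {n t : ℕ} (Q : Set (Fin n → ℝ)) (A : Matrix (Fin t) (Fin n) ℤ) : Prop :=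
  (∀ y : Fin t → ℤ, ∃ x : Fin n → ℤ, A.mulVec x = y) ∧
  matMap A '' Q = unimodSimplex t ∧
  ∀ k l : Fin (t + 1), NormEquiv (cayleyPiece A Q k) (cayleyPiece A Q l)

/-- The unimodular affine map `x ↦ Ux + w`. -/
def unimodMap {n : ℕ} (U : Matrix (Fin n) (Fin n) ℤ) (w : Fin n → ℤ) :
    (Fin n → ℝ) → (Fin n → ℝ) :=
  fun x i => (∑ j, (U i j : ℝ) * x j) + (w i : ℝ)

/-- The set `{s > 0 : P^(s) has the same normal fan as P}`; the nef value is
`τ(P) = (sSup (tauSet P))⁻¹`. -/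
def tauSet {n : ℕ} (P : Set (Fin n → ℝ)) : Set ℝ :=
  {s : ℝ | 0 < s ∧ NormEquiv (adjointPoly P s) P}

/-!
Fix a vertex `w` and the lattice basis `E₁, …, Eₙ` of its edge directions. Calling `i` and `j`
equivalent if `i = j` or `w + Eᵢ + Eⱼ ∉ P` gives an equivalence relation. If each of its classes has
at most `n / 2` elements, Hall's theorem gives a permutation `π` with `w + Eᵢ + E_{π i} ∈ P` for all
`i`. Averaging these points puts the lattice point `∑ Eᵢ`, which is positive on all facets through
`w`, into `(n / 2) (P - w)`, so that `cd(P) ≤ n / 2 + 1`. Hence `cd(P) ≥ (n + 3) / 2` forces a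
class `S` with more than `n / 2` elements. Similar sums of edge vectors show that the edges in `S`
have length one, that near `w` the polytope `P` fibres in unimodular simplices with edge directions
`S`, and that `cd(P) = |S| + 1`.

The lattice distances of a point to the `|S| + 1` facets cutting out the fibre have sum `1`, so
`P^(s) ≠ ∅` implies `s (|S| + 1) ≤ 1`, which gives `μ(P) = cd(P)`. For `τ(P)`, let `C` run over the
torus curves of the edges: `P^(s)` has the normal fan of `P` as long as `(L + sK) · C > 0` for all
`C`. Among the curves maximizing `(-K · C) / (L · C)`, one of minimal length has intersection number
at most `1` with every facet divisor, which bounds this ratio by `cd(P)`.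
-/

/-! ### Integrality -/

/-- The integers inside `ℝ`. A subring, so that `x ∈ intSubring` is an integrality predicate with
closure lemmas. -/
def intSubring : Subring ℝ := (Int.castRingHom ℝ).range

lemma mem_intSubring {x : ℝ} : x ∈ intSubring ↔ ∃ z : ℤ, x = z := by
  simp only [intSubring, RingHom.mem_range, eq_intCast, eq_comm]

lemma one_le_of_mem_intSubring {x : ℝ} (hx : x ∈ intSubring) (h : 0 < x) : 1 ≤ x := by
  obtain ⟨z, rfl⟩ := mem_intSubring.1 hx
  exact_mod_cast h

lemma add_one_le_of_mem_intSubring {x y : ℝ} (hx : x ∈ intSubring) (hy : y ∈ intSubring)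
    (h : x < y) : x + 1 ≤ y := by
  linarith [one_le_of_mem_intSubring (sub_mem hy hx) (sub_pos.2 h)]

lemma eq_one_of_mul_eq_one_of_mem_intSubring {x y : ℝ} (hx : x ∈ intSubring) (hy : y ∈ intSubring)
    (h : 0 < x) (hxy : x * y = 1) : x = 1 := by
  have hx1 := one_le_of_mem_intSubring hx h
  have hy1 := one_le_of_mem_intSubring hy (pos_of_mul_pos_right (hxy ▸ one_pos) h.le)
  nlinarith

/-- The lattice `ℤ^n` as an additive subgroup of `ℝ^n`, giving access to the closure lemmas for
lattice points. -/
def latticePts (n : ℕ) : AddSubgroup (Fin n → ℝ) where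
  carrier := {x | IsLatticePt x}
  zero_mem' _ := mem_intSubring.1 (zero_mem intSubring)
  add_mem' hx hy i :=
    mem_intSubring.1 (add_mem (mem_intSubring.2 (hx i)) (mem_intSubring.2 (hy i)))
  neg_mem' hx i := mem_intSubring.1 (neg_mem (mem_intSubring.2 (hx i)))

/-- A basis of `ℝ^n` that is a `ℤ`-basis of `ℤ^n`: its vectors are lattice points, and lattice
points have integer coordinates with respect to it. -/
structure IsLatticeBasis {n : ℕ} (b : Module.Basis (Fin n) ℝ (Fin n → ℝ)) : Prop where
  isLatticePt (i : Fin n) : IsLatticePt (b i)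
  coord_mem (i : Fin n) {z : Fin n → ℝ} (hz : IsLatticePt z) : b.coord i z ∈ intSubring

lemma coord_basis {ι R M : Type*} [DecidableEq ι] [Semiring R] [AddCommMonoid M] [Module R M]
    (b : Module.Basis ι R M) (i j : ι) : b.coord i (b j) = if i = j then 1 else 0 := by
  simp only [Module.Basis.coord_apply, Module.Basis.repr_self, Finsupp.single_apply, eq_comm]

lemma coord_basis_self {ι R M : Type*} [Semiring R] [AddCommMonoid M] [Module R M]
    (b : Module.Basis ι R M) (i : ι) : b.coord i (b i) = 1 := by
  classical simp only [coord_basis, if_true]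

lemma coord_basis_of_ne {ι R M : Type*} [Semiring R] [AddCommMonoid M] [Module R M]
    (b : Module.Basis ι R M) {i j : ι} (h : i ≠ j) : b.coord i (b j) = 0 := by
  classical simp only [coord_basis, if_neg h]

lemma coord_injective {ι R M : Type*} [Semiring R] [Nontrivial R] [AddCommMonoid M] [Module R M]
    (b : Module.Basis ι R M) : Function.Injective b.coord := by
  intro i j h
  by_contra hij
  exact one_ne_zero ((coord_basis_self b j).symm.trans ((congr($h (b j))).symm.trans
    (coord_basis_of_ne b hij)))

lemma eq_smul_coord {ι R M : Type*} [CommSemiring R] [AddCommMonoid M] [Module R M]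
    (b : Module.Basis ι R M) {f : M →ₗ[R] R} {i : ι} (h : ∀ j ≠ i, f (b j) = 0) :
    f = f (b i) • b.coord i :=
  b.ext fun j => by
    rcases eq_or_ne j i with rfl | hj
    · rw [LinearMap.smul_apply, coord_basis_self, smul_eq_mul, mul_one]
    · rw [h j hj, LinearMap.smul_apply, coord_basis_of_ne b hj.symm, smul_zero]

namespace IsLatticeBasis

variable {n : ℕ} {b c : Module.Basis (Fin n) ℝ (Fin n → ℝ)}

lemma eq_neg_of_eq_smul (hb : IsLatticeBasis b) (hc : IsLatticeBasis c) {i j : Fin n} {t : ℝ}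
    (ht : t < 0) (h : b i = t • c j) : b i = -c j := by
  have htc : t ∈ intSubring := by
    have := hc.coord_mem j (hb.isLatticePt i)
    rwa [h, map_smul, coord_basis_self, smul_eq_mul, mul_one] at this
  have htb : t * b.coord i (c j) = 1 := by
    rw [← smul_eq_mul, ← map_smul, ← h, coord_basis_self]
  have := eq_one_of_mul_eq_one_of_mem_intSubring (neg_mem htc)
    (neg_mem (hb.coord_mem i (hc.isLatticePt j))) (neg_pos.2 ht) (by rw [neg_mul_neg, htb])
  rw [h, neg_eq_iff_eq_neg.1 this, neg_one_smul]

lemma coord_eq_of_coord_eq_zero (hb : IsLatticeBasis b) (hc : IsLatticeBasis c) {i j : Fin n}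
    (hpos : 0 < b.coord i (c j)) (h : ∀ k ≠ i, c.coord j (b k) = 0) :
    c.coord j = b.coord i := by
  have hprop := eq_smul_coord b h
  have hmul : b.coord i (c j) * c.coord j (b i) = 1 := by
    rw [mul_comm, ← smul_eq_mul, ← LinearMap.smul_apply, ← hprop, coord_basis_self]
  have hone := eq_one_of_mul_eq_one_of_mem_intSubring (hb.coord_mem i (hc.isLatticePt j))
    (hc.coord_mem j (hb.isLatticePt i)) hpos hmul
  rw [hone, one_mul] at hmul
  rw [hprop, hmul, one_smul]

end IsLatticeBasis

/-! ### Convexity -/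

section Convexity

variable {E κ : Type*} [AddCommGroup E] [Module ℝ E] {K : Set E}

lemma sum_mem_card_smul (hK : Convex ℝ K) (h0 : (0 : E) ∈ K) (s : Finset κ) {y : κ → E}
    (h : ∀ t ∈ s, y t ∈ K) : ∑ t ∈ s, y t ∈ (s.card : ℝ) • K := by
  classical
  induction s using Finset.induction_on with
  | empty => exact ⟨0, h0, by simp⟩
  | insert a s ha ih =>
    rw [Finset.sum_insert ha, Finset.card_insert_of_notMem ha, Nat.cast_add_one,
      add_comm (y a), hK.add_smul (by positivity) zero_le_one, one_smul]
    exact Set.add_mem_add (ih fun t ht => h t (Finset.mem_insert_of_mem ht))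
      (h a (Finset.mem_insert_self a s))

lemma sum_add_sum_mem_card_smul (hK : Convex ℝ K) (h0 : (0 : E) ∈ K) {s t : Finset κ}
    (hst : s.card = t.card) {e : κ → E} (h : ∀ i ∈ s, ∀ j ∈ t, e i + e j ∈ K) :
    ∑ i ∈ s, e i + ∑ j ∈ t, e j ∈ (s.card : ℝ) • K := by
  let σ := Finset.equivOfCardEq hst
  have hsum : ∑ i ∈ s, e i + ∑ j ∈ t, e j = ∑ i : s, (e i + e (σ i)) := by
    rw [Finset.sum_add_distrib, σ.sum_comp (fun j : t => e j), Finset.sum_coe_sort s e,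
      Finset.sum_coe_sort t e]
  rw [hsum, ← Finset.card_attach, ← Finset.univ_eq_attach]
  exact sum_mem_card_smul hK h0 _ fun i _ => h i i.2 (σ i) (σ i).2

lemma sum_add_sum_mem_card_smul_of_card_le (hK : Convex ℝ K) (h0 : (0 : E) ∈ K) {s t : Finset κ}
    (hst : s.card ≤ t.card) {e : κ → E} (h : ∀ i ∈ s, ∀ j ∈ t, e i + e j ∈ K)
    (ht : ∀ j ∈ t, e j ∈ K) : ∑ i ∈ s, e i + ∑ j ∈ t, e j ∈ (t.card : ℝ) • K := by
  classical
  obtain ⟨t', ht', hcard⟩ := Finset.exists_subset_card_eq hst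
  have hpairs := sum_add_sum_mem_card_smul hK h0 hcard.symm fun i hi j hj => h i hi j (ht' hj)
  have hrest := sum_mem_card_smul hK h0 (t \ t') fun j hj => ht j (Finset.sdiff_subset hj)
  rw [← Finset.sum_sdiff ht', add_comm (∑ j ∈ t \ t', e j), ← add_assoc,
    ← Finset.card_sdiff_add_card_eq_card ht', hcard, Nat.cast_add, add_comm (_ : ℝ),
    hK.add_smul (by positivity) (by positivity)]
  exact Set.add_mem_add hpairs hrest

lemma sum_add_smul_mem_smul (hK : Convex ℝ K) (h0 : (0 : E) ∈ K) {s : Finset κ} {e : κ → E} {x : E}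
    (h : ∀ i ∈ s, (2 : ℝ) • e i + x ∈ K) (hx : x ∈ K) {r : ℝ} (hr : s.card ≤ 2 * r) :
    ∑ i ∈ s, e i + r • x ∈ r • K := by
  have hsum := Set.smul_mem_smul_set (a := (1 / 2 : ℝ)) (sum_mem_card_smul hK h0 s h)
  have hx' := Set.smul_mem_smul_set (a := r - 1 / 2 * s.card) hx
  rw [Finset.sum_add_distrib, ← Finset.smul_sum, Finset.sum_const, ← Nat.cast_smul_eq_nsmul ℝ,
    smul_smul] at hsum
  have hr' : 0 ≤ r - 1 / 2 * s.card := by linarith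
  have := Set.add_mem_add hsum hx'
  rw [← hK.add_smul (by positivity) hr'] at this
  rw [add_sub_cancel] at this
  convert this using 1
  module

end Convexity

/-! ### Colourings -/

/-- Hall's condition holds for the relation `c b ≠ c a`: two colours already see everything, and
one colour sees all but its own class. -/
lemma exists_perm_apply_ne {α β : Type*} [Fintype α] [DecidableEq β] (c : α → β)
    (h : ∀ v, 2 * (Finset.univ.filter (c · = v)).card ≤ Fintype.card α) :
    ∃ π : Equiv.Perm α, ∀ a, c (π a) ≠ c a := by
  classical
  let nbrs (a : α) : Finset α := Finset.univ.filter (c · ≠ c a)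
  have hall (A : Finset α) : A.card ≤ (A.biUnion nbrs).card := by
    rcases A.eq_empty_or_nonempty with rfl | ⟨a, ha⟩
    · simp
    by_cases hmono : ∀ b ∈ A, c b = c a
    · have hA : A ⊆ Finset.univ.filter (c · = c a) := fun b hb => by simpa using hmono b hb
      have hcard := Finset.card_filter_add_card_filter_not (s := Finset.univ) (c · = c a)
      have hle := Finset.card_le_card hA
      have hn := Finset.card_le_card (Finset.subset_biUnion_of_mem nbrs ha)
      have hcolour := h (c a)
      rw [Finset.card_univ] at hcard
      simp only [nbrs, ne_eq] at hn ⊢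
      omega
    · push Not at hmono
      obtain ⟨b, hb, hba⟩ := hmono
      refine Finset.card_le_card fun x _ => Finset.mem_biUnion.2 ?_
      by_cases hx : c x = c a
      · exact ⟨b, hb, by simpa [nbrs, hx] using hba.symm⟩
      · exact ⟨a, ha, by simpa [nbrs] using hx⟩
  obtain ⟨f, hinj, hf⟩ := (Finset.all_card_le_biUnion_card_iff_exists_injective nbrs).1 hall
  exact ⟨.ofBijective f (Finite.injective_iff_bijective.1 hinj), fun a => by
    simpa [nbrs] using hf a⟩

/-! ### Integral functionals -/

/-- The pairing `iprod a` as a linear functional. -/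
def iprodHom {n : ℕ} (a : Fin n → ℤ) : (Fin n → ℝ) →ₗ[ℝ] ℝ :=
  dotProductEquiv ℝ (Fin n) fun i => a i

lemma iprodHom_apply {n : ℕ} (a : Fin n → ℤ) (x : Fin n → ℝ) : iprodHom a x = iprod a x :=
  rfl

lemma iprodHom_single {n : ℕ} (a : Fin n → ℤ) (j : Fin n) : iprodHom a (Pi.single j 1) = a j := by
  simp [iprodHom]

lemma iprodHom_mem_intSubring {n : ℕ} (a : Fin n → ℤ) {x : Fin n → ℝ} (hx : IsLatticePt x) :
    iprodHom a x ∈ intSubring := by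
  rw [iprodHom_apply, iprod]
  exact sum_mem fun i _ => mul_mem (intCast_mem _ _) (mem_intSubring.2 (hx i))

lemma isLatticePt_single {n : ℕ} (j : Fin n) : IsLatticePt (Pi.single j (1 : ℝ) : Fin n → ℝ) := by
  intro i
  rw [Pi.single_apply]
  split_ifs
  exacts [⟨1, by simp⟩, ⟨0, by simp⟩]

lemma finrank_ker_coord {n : ℕ} (b : Module.Basis (Fin n) ℝ (Fin n → ℝ)) (i : Fin n) :
    Module.finrank ℝ (LinearMap.ker (b.coord i)) = n - 1 := by
  have hne : b.coord i ≠ 0 := fun h => by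
    simpa [h] using coord_basis_self b i
  have := Module.Dual.finrank_ker_add_one_of_ne_zero hne
  rw [Module.finrank_fin_fun] at this
  omega

namespace IsLatticeBasis

variable {n : ℕ} {b : Module.Basis (Fin n) ℝ (Fin n → ℝ)}

lemma exists_isPrimitive_iprodHom_eq_coord (hb : IsLatticeBasis b) (i : Fin n) :
    ∃ a, IsPrimitive a ∧ iprodHom a = b.coord i := by
  choose a ha using fun j => mem_intSubring.1 (hb.coord_mem i (isLatticePt_single j))
  have hab : iprodHom a = b.coord i := LinearMap.pi_ext' fun j => LinearMap.ext_ring <| by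
    simp only [LinearMap.comp_apply, LinearMap.coe_single, iprodHom_single, ha]
  choose m hm using hb.isLatticePt i
  have hone : ∑ j, a j * m j = 1 := by
    have : iprod a (b i) = 1 := by rw [← iprodHom_apply, hab, coord_basis_self]
    simp only [iprod, hm] at this
    exact_mod_cast this
  refine ⟨a, ⟨?_, fun d hd => isUnit_of_dvd_one ?_⟩, hab⟩
  · rintro rfl
    simp at hone
  · rw [← hone]
    exact Finset.dvd_sum fun j _ => (hd j).mul_right _

lemma iprodHom_eq_coord (hb : IsLatticeBasis b) {a : Fin n → ℤ} (ha : IsPrimitive a) {i : Fin n}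
    (hi : 0 ≤ iprodHom a (b i)) (h : ∀ j ≠ i, iprodHom a (b j) = 0) :
    iprodHom a = b.coord i := by
  have hsmul := eq_smul_coord b h
  obtain ⟨d, hd⟩ := mem_intSubring.1 (iprodHom_mem_intSubring a (hb.isLatticePt i))
  rw [hd] at hi hsmul
  have hunit : IsUnit d := ha.2 d fun j => by
    obtain ⟨m, hm⟩ := mem_intSubring.1 (hb.coord_mem i (isLatticePt_single j))
    have := congr($hsmul (Pi.single j 1))
    rw [iprodHom_single, LinearMap.smul_apply, hm, smul_eq_mul] at this
    exact ⟨m, by exact_mod_cast this⟩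
  have hone : d = 1 := (Int.isUnit_iff.1 hunit).resolve_right fun h => by
    rw [h] at hi
    norm_num at hi
  rw [hsmul, hone, Int.cast_one, one_smul]

end IsLatticeBasis

lemma vectorSpan_le_ker {k V : Type*} [Ring k] [AddCommGroup V] [Module k V] {f : V →ₗ[k] k}
    {F : Set V} {c : k} (h : ∀ x ∈ F, f x = c) : vectorSpan k F ≤ LinearMap.ker f := by
  rw [vectorSpan_def, Submodule.span_le]
  rintro _ ⟨x, hx, y, hy, rfl⟩
  exact LinearMap.mem_ker.2 ((map_sub f x y).trans (sub_eq_zero.2 ((h x hx).trans (h y hy).symm)))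

/-! ### Vertex charts of a smooth polytope -/

/-- The local combinatorial data of a smooth lattice polytope `P` with vertices indexed by `ι`:
at each vertex a lattice basis of edge directions whose coordinate cone contains `P`, and for each
edge its lattice length, its other endpoint `nbr w i`, and the index `back w i` under which the
same edge appears there. -/
structure SmoothCharts {n : ℕ} (P : Set (Fin n → ℝ)) (ι : Type*) where
  vertex : ι → Fin n → ℝ
  edge : ι → Module.Basis (Fin n) ℝ (Fin n → ℝ)
  len : ι → Fin n → ℕ
  nbr : ι → Fin n → ι
  back : ι → Fin n → Fin n
  finite : Finite ι
  nonempty : Nonempty ι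
  eq_convexHull : P = convexHull ℝ (Set.range vertex)
  isLatticePt_vertex : ∀ w, IsLatticePt (vertex w)
  isLatticeBasis_edge : ∀ w, IsLatticeBasis (edge w)
  len_pos : ∀ w i, 1 ≤ len w i
  vertex_nbr : ∀ w i, vertex (nbr w i) = vertex w + (len w i : ℝ) • edge w i
  edge_back : ∀ w i, edge (nbr w i) (back w i) = -edge w i
  coord_nonneg : ∀ w, ∀ x ∈ P, ∀ i, 0 ≤ (edge w).coord i (x - vertex w)

namespace SmoothCharts

variable {n : ℕ} {P : Set (Fin n → ℝ)} {ι : Type*} (D : SmoothCharts P ι)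

/-- The lattice distance of `x` to the facet through `w` that does not contain the
edge `i`. -/
def height (w : ι) (i : Fin n) (x : Fin n → ℝ) : ℝ := (D.edge w).coord i (x - D.vertex w)

/-- The lattice distance of `x` to the facet that the edge `i` meets at its far end. -/
def oppHeight (w : ι) (i : Fin n) (x : Fin n → ℝ) : ℝ := D.height (D.nbr w i) (D.back w i) x

/-- The slope of `oppHeight w i` along the edge `j`. On the toric variety of `P` this is
`-(Dⱼ · Cᵢ)` for the curve `Cᵢ` of the edge `i` and the prime divisor `Dⱼ` of the facet on which
`height w j` vanishes. -/
def slope (w : ι) (i j : Fin n) : ℝ := (D.edge (D.nbr w i)).coord (D.back w i) (D.edge w j)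

/-- `P` translated so that the vertex `w` becomes the origin. -/
def centered (w : ι) : Set (Fin n → ℝ) := {y | D.vertex w + y ∈ P}

include D in
lemma convex : Convex ℝ P := by
  rw [D.eq_convexHull]
  exact convex_convexHull ℝ _

lemma vertex_mem (w : ι) : D.vertex w ∈ P :=
  D.eq_convexHull.superset (subset_convexHull ℝ _ (Set.mem_range_self w))

lemma zero_mem_centered (w : ι) : 0 ∈ D.centered w := by
  simpa [centered] using D.vertex_mem w

lemma convex_centered (w : ι) : Convex ℝ (D.centered w) :=
  D.convex.translate_preimage_right (D.vertex w)

lemma height_nonneg (w : ι) (i : Fin n) {x : Fin n → ℝ} (hx : x ∈ P) : 0 ≤ D.height w i x :=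
  D.coord_nonneg w x hx i

lemma coord_nonneg_of_mem_centered (w : ι) (i : Fin n) {y : Fin n → ℝ} (hy : y ∈ D.centered w) :
    0 ≤ (D.edge w).coord i y := by
  simpa using D.coord_nonneg w _ hy i

lemma height_add (w : ι) (i : Fin n) (x y : Fin n → ℝ) :
    D.height w i (x + y) = D.height w i x + (D.edge w).coord i y := by
  rw [height, height, ← map_add, sub_add_eq_add_sub]

lemma height_vertex (w : ι) (i : Fin n) : D.height w i (D.vertex w) = 0 := by
  rw [height, sub_self, map_zero]

lemma height_vertex_add (w : ι) (i : Fin n) (y : Fin n → ℝ) :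
    D.height w i (D.vertex w + y) = (D.edge w).coord i y := by
  rw [height_add, height_vertex, zero_add]

lemma sum_height_smul_edge (w : ι) (x : Fin n → ℝ) :
    ∑ i, D.height w i x • D.edge w i = x - D.vertex w :=
  (D.edge w).sum_repr _

lemma map_eq_add_sum (f : (Fin n → ℝ) →ₗ[ℝ] ℝ) (w : ι) (x : Fin n → ℝ) :
    f x = f (D.vertex w) + ∑ i, D.height w i x * f (D.edge w i) := by
  conv_lhs => rw [← add_sub_cancel (D.vertex w) x, map_add, ← D.sum_height_smul_edge w x]
  simp only [map_sum, map_smul, smul_eq_mul]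

lemma height_eq_add_sum (v w : ι) (k : Fin n) (x : Fin n → ℝ) :
    D.height v k x =
      D.height v k (D.vertex w) + ∑ j, D.height w j x * (D.edge v).coord k (D.edge w j) := by
  rw [height, height, map_sub, map_sub, D.map_eq_add_sum _ w x]
  ring

lemma eq_of_height_eq (w : ι) {x y : Fin n → ℝ} (h : ∀ i, D.height w i x = D.height w i y) :
    x = y := by
  rw [← sub_left_inj (a := D.vertex w), ← sum_height_smul_edge, ← sum_height_smul_edge]
  simp only [h]

lemma len_cast_pos (w : ι) (i : Fin n) : (0 : ℝ) < D.len w i := by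
  exact_mod_cast D.len_pos w i

lemma len_mem_intSubring (w : ι) (i : Fin n) : (D.len w i : ℝ) ∈ intSubring :=
  natCast_mem intSubring _

lemma slope_mem_intSubring (w : ι) (i j : Fin n) : D.slope w i j ∈ intSubring :=
  (D.isLatticeBasis_edge _).coord_mem _ ((D.isLatticeBasis_edge w).isLatticePt j)

lemma smul_edge_mem_centered (w : ι) (i : Fin n) {t : ℝ} (h0 : 0 ≤ t) (h1 : t ≤ D.len w i) :
    t • D.edge w i ∈ D.centered w := by
  have hend : (D.len w i : ℝ) • D.edge w i ∈ D.centered w := by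
    simpa only [centered, Set.mem_ofPred_eq, ← D.vertex_nbr] using D.vertex_mem (D.nbr w i)
  have hpos := D.len_cast_pos w i
  have := (D.convex_centered w).smul_mem_of_zero_mem (D.zero_mem_centered w) hend
    (t := t / D.len w i) ⟨by positivity, (div_le_one hpos).2 h1⟩
  rwa [smul_smul, div_mul_cancel₀ t hpos.ne'] at this

lemma edge_mem_centered (w : ι) (i : Fin n) : D.edge w i ∈ D.centered w := by
  simpa using D.smul_edge_mem_centered w i zero_le_one (by exact_mod_cast D.len_pos w i)

section FacetComparison

variable {D} {v w : ι} {k : Fin n}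

lemma coord_edge_nonneg (h : D.height v k (D.vertex w) = 0) (j : Fin n) :
    0 ≤ (D.edge v).coord k (D.edge w j) := by
  have := D.height_nonneg v k (D.edge_mem_centered w j)
  rwa [height_add, h, zero_add] at this

lemma height_eq_zero_of_coord_pos (h : D.height v k (D.vertex w) = 0) {i : Fin n}
    (hi : 0 < (D.edge v).coord k (D.edge w i)) {y : Fin n → ℝ} (hy : y ∈ P)
    (hy0 : D.height v k y = 0) : D.height w i y = 0 := by
  rw [D.height_eq_add_sum v w, h, zero_add] at hy0
  have hterm := (Finset.sum_eq_zero_iff_of_nonneg fun j _ =>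
    mul_nonneg (D.height_nonneg w j hy) (coord_edge_nonneg h j)).1 hy0 i (Finset.mem_univ i)
  exact (mul_eq_zero.1 hterm).resolve_right hi.ne'

/-- A facet of `P` through the vertex `w`, seen from another vertex `v`, is one of the coordinate
facets at `w`. -/
lemma exists_coord_eq (h : D.height v k (D.vertex w) = 0) :
    ∃ i, (D.edge w).coord i = (D.edge v).coord k ∧ D.height w i = D.height v k := by
  obtain ⟨i, hi⟩ : ∃ i, (D.edge v).coord k (D.edge w i) ≠ 0 := by
    by_contra! hcon
    have hzero : (D.edge v).coord k = 0 := (D.edge w).ext hcon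
    exact one_ne_zero ((coord_basis_self (D.edge v) k).symm.trans (by rw [hzero]; rfl))
  have hpos := lt_of_le_of_ne (coord_edge_nonneg h i) hi.symm
  have hv := height_eq_zero_of_coord_pos h hpos (D.vertex_mem v) (D.height_vertex v k)
  have hcoord : (D.edge w).coord i = (D.edge v).coord k := by
    refine (D.isLatticeBasis_edge v).coord_eq_of_coord_eq_zero (D.isLatticeBasis_edge w) hpos
      fun j hj => ?_
    have := height_eq_zero_of_coord_pos h hpos (D.edge_mem_centered v j)
      (by rw [height_vertex_add, coord_basis_of_ne _ hj.symm])
    rwa [height_add, hv, zero_add] at this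
  refine ⟨i, hcoord, funext fun x => ?_⟩
  conv_rhs => rw [← add_sub_cancel (D.vertex w) x, height_add, h, zero_add]
  rw [height, hcoord]

end FacetComparison

/-! ### Slopes -/

lemma slope_self (w : ι) (i : Fin n) : D.slope w i i = -1 := by
  rw [slope, ← neg_neg (D.edge w i), ← D.edge_back, map_neg, coord_basis_self]

lemma oppHeight_vertex (w : ι) (i : Fin n) : D.oppHeight w i (D.vertex w) = D.len w i := by
  have h := D.height_add (D.nbr w i) (D.back w i) (D.vertex w) ((D.len w i : ℝ) • D.edge w i)
  rw [← D.vertex_nbr, height_vertex, map_smul, ← slope, slope_self, smul_eq_mul] at h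
  rw [oppHeight]
  linarith

lemma oppHeight_eq (w : ι) (i : Fin n) (x : Fin n → ℝ) :
    D.oppHeight w i x = D.len w i + ∑ j, D.height w j x * D.slope w i j := by
  rw [oppHeight, D.height_eq_add_sum _ w, ← oppHeight, oppHeight_vertex]
  rfl

lemma oppHeight_vertex_add (w : ι) (i : Fin n) (y : Fin n → ℝ) :
    D.oppHeight w i (D.vertex w + y) =
      D.len w i + (D.edge (D.nbr w i)).coord (D.back w i) y := by
  rw [oppHeight, height_add, ← oppHeight, oppHeight_vertex]

lemma oppHeight_nonneg (w : ι) (i : Fin n) {x : Fin n → ℝ} (hx : x ∈ P) :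
    0 ≤ D.oppHeight w i x :=
  D.height_nonneg _ _ hx

lemma height_vertex_nbr (w : ι) {i j : Fin n} (h : j ≠ i) :
    D.height w j (D.vertex (D.nbr w i)) = 0 := by
  rw [D.vertex_nbr, height_vertex_add, map_smul, coord_basis_of_ne _ h, smul_zero]

lemma height_nbr_vertex (w : ι) {i k : Fin n} (h : k ≠ D.back w i) :
    D.height (D.nbr w i) k (D.vertex w) = 0 := by
  have hw : D.vertex w =
      D.vertex (D.nbr w i) + (D.len w i : ℝ) • D.edge (D.nbr w i) (D.back w i) := by
    rw [D.edge_back, D.vertex_nbr, smul_neg, add_neg_cancel_right]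
  rw [hw, height_vertex_add, map_smul, coord_basis_of_ne _ h, smul_zero]

/-- The wall relation across the edge `i`. -/
lemma exists_edge_nbr_eq (w : ι) {i j : Fin n} (hij : i ≠ j) :
    ∃ k, D.edge (D.nbr w i) k = D.edge w j + D.slope w i j • D.edge w i := by
  obtain ⟨k, hk, -⟩ := exists_coord_eq (D.height_vertex_nbr w hij.symm)
  have hki : k ≠ D.back w i := by
    rintro rfl
    have := congr($hk (D.edge w i))
    rw [← slope, slope_self, coord_basis_of_ne _ hij.symm] at this
    norm_num at this
  refine ⟨k, (D.edge (D.nbr w i)).ext_elem fun m => ?_⟩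
  rw [← Module.Basis.coord_apply, ← Module.Basis.coord_apply, map_add, map_smul, smul_eq_mul]
  rcases eq_or_ne m (D.back w i) with rfl | hm
  · rw [← slope, ← slope, slope_self, coord_basis_of_ne _ hki.symm]
    ring
  obtain ⟨l, hl, -⟩ := exists_coord_eq (D.height_nbr_vertex w hm)
  have hli : l ≠ i := by
    rintro rfl
    have := congr($hl (D.edge w l))
    rw [coord_basis_self, ← neg_neg (D.edge w l), ← D.edge_back, map_neg,
      coord_basis_of_ne _ hm] at this
    norm_num at this
  have hmk : m = k ↔ l = j := by
    rw [← (coord_injective (D.edge (D.nbr w i))).eq_iff, hk, ← hl,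
      (coord_injective (D.edge w)).eq_iff]
  rw [← hl, coord_basis_of_ne _ hli, hl, coord_basis, ← hl, coord_basis]
  simp only [hmk, mul_zero, add_zero]

lemma len_add_slope_smul_add_mem (w : ι) {i j : Fin n} (hij : i ≠ j) :
    ((D.len w i : ℝ) + D.slope w i j) • D.edge w i + D.edge w j ∈ D.centered w := by
  obtain ⟨k, hk⟩ := D.exists_edge_nbr_eq w hij
  have h : D.vertex (D.nbr w i) + D.edge (D.nbr w i) k ∈ P := D.edge_mem_centered (D.nbr w i) k
  rw [hk, D.vertex_nbr] at h
  rw [add_smul, centered, Set.mem_ofPred_eq]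
  convert h using 1
  abel

lemma neg_len_le_slope (w : ι) {i j : Fin n} (hij : i ≠ j) : -(D.len w i : ℝ) ≤ D.slope w i j := by
  have := D.coord_nonneg_of_mem_centered w i (D.len_add_slope_smul_add_mem w hij)
  rw [map_add, map_smul, coord_basis_self, coord_basis_of_ne _ hij, smul_eq_mul] at this
  linarith

lemma smul_add_mem_centered (w : ι) {i j : Fin n} {t : ℝ} (h0 : 0 ≤ t) (hij : i ≠ j)
    (h : t ≤ D.len w i + D.slope w i j) :
    t • D.edge w i + D.edge w j ∈ D.centered w := by
  rcases h0.eq_or_lt with rfl | h0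
  · simpa using D.edge_mem_centered w j
  have hq := h0.trans_le h
  have := (D.convex_centered w).add_smul_mem (D.edge_mem_centered w j)
    (by rw [add_comm]; exact D.len_add_slope_smul_add_mem w hij)
    (t := t / (D.len w i + D.slope w i j)) ⟨by positivity, (div_le_one hq).2 h⟩
  rwa [smul_smul, div_mul_cancel₀ t hq.ne', add_comm] at this

/-! ### Adjacent edge directions -/

/-- Two edge directions at `w` are adjacent if the lattice parallelogram they span leaves `P`. -/
def Adj (w : ι) (i j : Fin n) : Prop := D.edge w i + D.edge w j ∉ D.centered w

namespace Adj

variable {D} {w : ι} {i j k : Fin n}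

lemma symm (h : D.Adj w i j) : D.Adj w j i := by
  rwa [Adj, add_comm]

lemma len_add_slope (hij : i ≠ j) (h : D.Adj w i j) : (D.len w i : ℝ) + D.slope w i j = 0 := by
  by_contra hne
  have hpos := lt_of_le_of_ne (neg_le_iff_add_nonneg'.1 (D.neg_len_le_slope w hij)) (Ne.symm hne)
  have hone := one_le_of_mem_intSubring
    (add_mem (D.len_mem_intSubring w i) (D.slope_mem_intSubring w i j)) hpos
  exact h (by simpa using D.smul_add_mem_centered w zero_le_one hij hone)

lemma len_eq_one_right (hij : i ≠ j) (h : D.Adj w i j) : D.len w j = 1 := by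
  have hfar := D.oppHeight_nonneg w i (D.smul_edge_mem_centered w j (D.len_cast_pos w j).le le_rfl)
  rw [oppHeight_vertex_add, map_smul, ← slope, smul_eq_mul,
    eq_neg_of_add_eq_zero_right (h.len_add_slope hij)] at hfar
  have hle : (D.len w j : ℝ) ≤ 1 := by nlinarith [D.len_cast_pos w i]
  exact le_antisymm (by exact_mod_cast hle) (D.len_pos w j)

lemma len_eq_one_left (hij : i ≠ j) (h : D.Adj w i j) : D.len w i = 1 :=
  h.symm.len_eq_one_right hij.symm

lemma slope_eq (hij : i ≠ j) (h : D.Adj w i j) : D.slope w i j = -1 := by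
  rw [eq_neg_of_add_eq_zero_right (h.len_add_slope hij), h.len_eq_one_left hij, Nat.cast_one]

lemma of_slope_eq (hlen : D.len w i = 1) (h : D.slope w i j = -1) : D.Adj w i j := by
  intro hmem
  have hfar := D.oppHeight_nonneg w i hmem
  rw [oppHeight_vertex_add, map_add, ← slope, ← slope, slope_self, h, hlen] at hfar
  norm_num at hfar

lemma slope_row_eq (hij : i ≠ j) (h : D.Adj w i j) : D.slope w i = D.slope w j := by
  have hzero : D.oppHeight w i (D.vertex (D.nbr w j)) = 0 := by
    rw [D.vertex_nbr, oppHeight_vertex_add, map_smul, ← slope, h.slope_eq hij,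
      h.len_eq_one_left hij, h.len_eq_one_right hij]
    norm_num
  obtain ⟨k, hk, -⟩ := exists_coord_eq hzero
  have hkj : k = D.back w j := by
    by_contra hne
    have := h.slope_eq hij
    rw [slope, ← hk, ← neg_neg (D.edge w j), ← D.edge_back, map_neg,
      coord_basis_of_ne _ hne] at this
    norm_num at this
  funext l
  rw [slope, slope, ← hk, hkj]

lemma trans (hij : i ≠ j) (hjk : j ≠ k) (h : D.Adj w i j) (h' : D.Adj w j k) : D.Adj w i k :=
  of_slope_eq (h.len_eq_one_left hij) (by rw [h.slope_row_eq hij, h'.slope_eq hjk])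

end Adj

/-- Adjacency of edge directions at `w`, made reflexive, is an equivalence relation. -/
def adjSetoid (w : ι) : Setoid (Fin n) where
  r i j := i = j ∨ D.Adj w i j
  iseqv.refl _ := Or.inl rfl
  iseqv.symm := Or.imp Eq.symm Adj.symm
  iseqv.trans := by
    rintro i j k (rfl | hij) (rfl | hjk)
    · exact Or.inl rfl
    · exact Or.inr hjk
    · exact Or.inr hij
    · by_cases h : i = j
      · exact Or.inr (h ▸ hjk)
      by_cases h' : j = k
      · exact Or.inr (h' ▸ hij)
      exact Or.inr (hij.trans h h' hjk)

/-! ### Interior points and the codegree -/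

lemma exists_vertex_forall_le (f : (Fin n → ℝ) →ₗ[ℝ] ℝ) :
    ∃ w, ∀ y ∈ P, f (D.vertex w) ≤ f y := by
  have := D.finite
  have := D.nonempty
  obtain ⟨w, hw⟩ := Finite.exists_min fun w => f (D.vertex w)
  refine ⟨w, fun y hy => ?_⟩
  have hsub : convexHull ℝ (Set.range D.vertex) ⊆ {y | f (D.vertex w) ≤ f y} :=
    convexHull_min (Set.range_subset_iff.2 hw) (convex_halfSpace_ge f.isLinear _)
  exact hsub (D.eq_convexHull ▸ hy)

include D in
lemma isCompact : IsCompact P := by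
  have := D.finite
  rw [D.eq_convexHull]
  exact (Set.finite_range D.vertex).isCompact_convexHull ℝ

lemma mem_of_height_nonneg {x : Fin n → ℝ} (h : ∀ w i, 0 ≤ D.height w i x) : x ∈ P := by
  by_contra hx
  obtain ⟨f, u, hfx, hfP⟩ := geometric_hahn_banach_point_closed D.convex D.isCompact.isClosed hx
  obtain ⟨w, hw⟩ := D.exists_vertex_forall_le f.toLinearMap
  have hsum : 0 ≤ ∑ i, D.height w i x * f (D.edge w i) :=
    Finset.sum_nonneg fun i _ => mul_nonneg (h w i) (by
      simpa using hw _ (D.edge_mem_centered w i))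
  have hfx' := D.map_eq_add_sum f.toLinearMap w x
  have hfw := hfP _ (D.vertex_mem w)
  simp only [ContinuousLinearMap.coe_coe] at hfx'
  linarith

lemma mem_interior_iff {x : Fin n → ℝ} : x ∈ interior P ↔ ∀ w i, 0 < D.height w i x := by
  constructor
  · intro hx w i
    have hcont : Continuous fun t : ℝ => x - t • D.edge w i := by fun_prop
    have hev : ∀ᶠ t in nhds (0 : ℝ), x - t • D.edge w i ∈ P :=
      hcont.continuousAt.eventually (by simpa using mem_interior_iff_mem_nhds.1 hx)
    obtain ⟨t, ht, ht0 : 0 < t⟩ :=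
      ((hev.filter_mono nhdsWithin_le_nhds).and (self_mem_nhdsWithin (s := Set.Ioi 0))).exists
    have := D.height_nonneg w i ht
    rw [sub_eq_add_neg, height_add, map_neg, map_smul, coord_basis_self, smul_eq_mul] at this
    linarith
  · have := D.finite
    have hcont (w : ι) (i : Fin n) : Continuous (D.height w i) :=
      (LinearMap.continuous_of_finiteDimensional _).comp (continuous_id.sub continuous_const)
    have hopen : IsOpen {x | ∀ w i, 0 < D.height w i x} := by
      simp only [Set.ofPred_forall]
      exact isOpen_iInter_of_finite fun w => isOpen_iInter_of_finite fun i =>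
        isOpen_lt continuous_const (hcont w i)
    exact fun h => interior_maximal
      (fun y hy => D.mem_of_height_nonneg fun w i => (hy w i).le) hopen h

lemma vertex_add_mem_interior (w : ι) {N k : ℝ} (hN : 0 ≤ N) (hk : N < k) {y : Fin n → ℝ}
    (hy : y ∈ N • D.centered w) (hpos : ∀ i, 0 < (D.edge w).coord i y) :
    D.vertex w + k⁻¹ • y ∈ interior P := by
  have hk0 := hN.trans_lt hk
  refine D.mem_interior_iff.2 fun v i => ?_
  rcases (D.height_nonneg v i (D.vertex_mem w)).eq_or_lt with h0 | h0
  · obtain ⟨j, -, hj⟩ := exists_coord_eq h0.symm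
    rw [← hj, height_vertex_add, map_smul]
    exact mul_pos (inv_pos.2 hk0) (hpos j)
  · obtain ⟨z, hz, rfl⟩ := hy
    have hzP := D.height_nonneg v i hz
    rw [height_add] at hzP
    rw [height_add, smul_smul, map_smul, smul_eq_mul]
    have hlt : k⁻¹ * N < 1 := by
      rw [mul_comm, ← div_eq_mul_inv]
      exact (div_lt_one hk0).2 hk
    have hle : 0 ≤ k⁻¹ * N := by positivity
    nlinarith [mul_nonneg hle hzP, mul_pos (sub_pos.2 hlt) h0]

lemma hasInteriorLatticePt (w : ι) {N : ℝ} {k : ℕ} (hN : 0 ≤ N) (hk : N < k) {y : Fin n → ℝ}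
    (hlat : IsLatticePt y) (hy : y ∈ N • D.centered w) (hpos : ∀ i, 0 < (D.edge w).coord i y) :
    HasInteriorLatticePt P k := by
  have hk0 : (k : ℝ) ≠ 0 := (hN.trans_lt hk).ne'
  refine ⟨(k : ℝ) • D.vertex w + y, ?_, (latticePts n).add_mem ?_ hlat⟩
  · rw [interior_smul₀ hk0, Set.mem_smul_set_iff_inv_smul_mem₀ hk0, smul_add,
      inv_smul_smul₀ hk0]
    exact D.vertex_add_mem_interior w hN hk hy hpos
  · rw [Nat.cast_smul_eq_nsmul]
    exact nsmul_mem (D.isLatticePt_vertex w) k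

lemma codeg_le (w : ι) {N : ℝ} {k : ℕ} (hN : 0 ≤ N) (hk : N < k) {y : Fin n → ℝ}
    (hlat : IsLatticePt y) (hy : y ∈ N • D.centered w) (hpos : ∀ i, 0 < (D.edge w).coord i y) :
    codeg P ≤ k :=
  Nat.sInf_le ⟨by exact_mod_cast hN.trans_lt hk, D.hasInteriorLatticePt w hN hk hlat hy hpos⟩

lemma isLatticePt_sum_edge (w : ι) (s : Finset (Fin n)) : IsLatticePt (∑ i ∈ s, D.edge w i) :=
  (latticePts n).sum_mem fun i _ => (D.isLatticeBasis_edge w).isLatticePt i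

lemma coord_sum_edge (w : ι) (i : Fin n) : (D.edge w).coord i (∑ j, D.edge w j) = 1 := by
  simp only [map_sum, coord_basis, Finset.sum_ite_eq, Finset.mem_univ, if_true]

include D in
lemma codeg_spec : 0 < codeg P ∧ HasInteriorLatticePt P (codeg P) := by
  obtain ⟨w⟩ := D.nonempty
  have hsum := sum_mem_card_smul (D.convex_centered w) (D.zero_mem_centered w) Finset.univ
    fun i _ => D.edge_mem_centered w i
  rw [Finset.card_univ, Fintype.card_fin] at hsum
  have hint : HasInteriorLatticePt P (n + 1) := by
    refine D.hasInteriorLatticePt w n.cast_nonneg ?_ (D.isLatticePt_sum_edge w _) hsum fun i => ?_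
    · exact_mod_cast n.lt_succ_self
    · rw [coord_sum_edge]
      exact one_pos
  exact Nat.sInf_mem (s := {t | 0 < t ∧ HasInteriorLatticePt P t}) ⟨n + 1, n.succ_pos, hint⟩

lemma exists_inv_codeg_le_height : ∃ x, ∀ w i, (codeg P : ℝ)⁻¹ ≤ D.height w i x := by
  obtain ⟨hpos, y, hy, hlat⟩ := D.codeg_spec
  have ht : (0 : ℝ) < codeg P := by exact_mod_cast hpos
  rw [interior_smul₀ ht.ne', Set.mem_smul_set_iff_inv_smul_mem₀ ht.ne', D.mem_interior_iff] at hy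
  refine ⟨(codeg P : ℝ)⁻¹ • y, fun w i => ?_⟩
  have hscale : codeg P * D.height w i ((codeg P : ℝ)⁻¹ • y) =
      (D.edge w).coord i y - codeg P * (D.edge w).coord i (D.vertex w) := by
    rw [height, map_sub, map_smul, smul_eq_mul, mul_sub, mul_inv_cancel_left₀ ht.ne']
  have hint : codeg P * D.height w i ((codeg P : ℝ)⁻¹ • y) ∈ intSubring := by
    have hb := D.isLatticeBasis_edge w
    rw [hscale]
    exact sub_mem (hb.coord_mem i hlat)
      (mul_mem (natCast_mem _ _) (hb.coord_mem i (D.isLatticePt_vertex w)))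
  exact (inv_le_iff_one_le_mul₀' ht).2 (one_le_of_mem_intSubring hint (mul_pos ht (hy w i)))

lemma two_mul_codeg_le_of_perm (w : ι) (π : Equiv.Perm (Fin n))
    (h : ∀ i, D.edge w i + D.edge w (π i) ∈ D.centered w) : 2 * codeg P ≤ n + 2 := by
  have hsum := sum_mem_card_smul (D.convex_centered w) (D.zero_mem_centered w) Finset.univ
    fun i _ => h i
  rw [Finset.sum_add_distrib, Equiv.sum_comp π (D.edge w), ← two_smul ℝ, Finset.card_univ,
    Fintype.card_fin] at hsum
  have hhalf := Set.smul_mem_smul_set (a := (2 : ℝ)⁻¹) hsum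
  rw [inv_smul_smul₀ two_ne_zero, smul_smul] at hhalf
  have hlt : (2 : ℝ)⁻¹ * n < ((n + 2) / 2 : ℕ) := by
    have : (n : ℝ) < 2 * ((n + 2) / 2 : ℕ) := by exact_mod_cast (by omega : n < 2 * ((n + 2) / 2))
    linarith
  have := D.codeg_le w (by positivity) hlt (D.isLatticePt_sum_edge w _) hhalf
    fun i => by rw [coord_sum_edge]; exact one_pos
  omega

lemma codeg_le_card_add_one (w : ι) {S : Finset (Fin n)} (hS : n ≤ 2 * S.card)
    (h : ∀ i ∈ S, ∀ j ∉ S, ¬D.Adj w i j) : codeg P ≤ S.card + 1 := by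
  have hcard := S.card_compl_add_card
  rw [Fintype.card_fin] at hcard
  have hsum := sum_add_sum_mem_card_smul_of_card_le (s := Sᶜ) (t := S) (D.convex_centered w)
    (D.zero_mem_centered w) (by omega)
    (fun i hi j hj => not_not.1 fun hij => h j hj i (Finset.mem_compl.1 hi) (Adj.symm hij))
    fun j _ => D.edge_mem_centered w j
  rw [Finset.sum_compl_add_sum] at hsum
  refine D.codeg_le w (by positivity) ?_ (D.isLatticePt_sum_edge w _) hsum
    fun i => by rw [coord_sum_edge]; exact one_pos
  exact_mod_cast S.card.lt_succ_self

/-- Pair the indices outside `S ∪ {j₀}` with indices in `S`. Averages of the points `2 Eᵢ + E_{j₀}`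
account for the indices of `S` that remain, and for `j₀`. -/
lemma two_mul_codeg_le_of_two_smul_add_mem (w : ι) {S : Finset (Fin n)} (hS : n < 2 * S.card)
    (h : ∀ i ∈ S, ∀ j ∉ S, ¬D.Adj w i j) {j₀ : Fin n} (hj₀ : j₀ ∉ S)
    (h2 : ∀ i ∈ S, (2 : ℝ) • D.edge w i + D.edge w j₀ ∈ D.centered w) :
    2 * codeg P ≤ n + 2 := by
  set H := Sᶜ.erase j₀
  have hH : H.card + 1 = Sᶜ.card := Finset.card_erase_add_one (Finset.mem_compl.2 hj₀)
  have hcard := S.card_compl_add_card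
  rw [Fintype.card_fin] at hcard
  obtain ⟨T, hTS, hT⟩ := Finset.exists_subset_card_eq (show H.card ≤ S.card by omega)
  have hR := Finset.card_sdiff_add_card_eq_card hTS
  set M := ((S \ T).card + 1) / 2 with hM
  have hconv := D.convex_centered w
  have h0 := D.zero_mem_centered w
  have hHT := sum_add_sum_mem_card_smul hconv h0 hT.symm (e := D.edge w)
    fun i hi j hj => not_not.1 fun hij =>
      h j (hTS hj) i (Finset.mem_compl.1 (Finset.mem_of_mem_erase hi)) (Adj.symm hij)
  have hRM := sum_add_smul_mem_smul hconv h0 (fun i hi => h2 i (Finset.sdiff_subset hi))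
    (D.edge_mem_centered w j₀) (r := M) (by exact_mod_cast (by omega : (S \ T).card ≤ 2 * M))
  have hmem := Set.add_mem_add hHT hRM
  rw [← hconv.add_smul (by positivity) (by positivity)] at hmem
  have hsum : ∑ i ∈ H, D.edge w i + ∑ i ∈ T, D.edge w i +
      (∑ i ∈ S \ T, D.edge w i + (M : ℝ) • D.edge w j₀) =
      ∑ i, D.edge w i + ((M - 1 : ℕ) : ℝ) • D.edge w j₀ := by
    rw [← Finset.sum_compl_add_sum S, ← Finset.sum_sdiff hTS,
      ← Finset.sum_erase_add Sᶜ _ (Finset.mem_compl.2 hj₀),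
      Nat.cast_sub (by omega : 1 ≤ M), Nat.cast_one]
    module
  rw [hsum] at hmem
  have hlt : (H.card : ℝ) + M < (H.card + M + 1 : ℕ) := by exact_mod_cast Nat.lt_succ_self _
  have hlat : IsLatticePt (∑ i, D.edge w i + ((M - 1 : ℕ) : ℝ) • D.edge w j₀) := by
    rw [Nat.cast_smul_eq_nsmul]
    exact (latticePts n).add_mem (D.isLatticePt_sum_edge w _)
      ((latticePts n).nsmul_mem ((D.isLatticeBasis_edge w).isLatticePt j₀) _)
  have := D.codeg_le w (by positivity) hlt hlat hmem fun i => by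
    rw [map_add, coord_sum_edge, map_smul, coord_basis, smul_eq_mul]
    positivity
  omega

/-! ### The large adjacency class -/

lemma exists_large_adj_class (w : ι) (hcd : n + 3 ≤ 2 * codeg P) :
    ∃ S : Finset (Fin n), n < 2 * S.card ∧ ∀ i ∈ S, ∀ j, j ∈ S ↔ i = j ∨ D.Adj w i j := by
  classical
  obtain ⟨q, hq⟩ : ∃ q : Quotient (D.adjSetoid w),
      n < 2 * (Finset.univ.filter (Quotient.mk (D.adjSetoid w) · = q)).card := by
    by_contra! hcon
    obtain ⟨π, hπ⟩ := exists_perm_apply_ne (Quotient.mk (D.adjSetoid w)) (by simpa using hcon)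
    have := D.two_mul_codeg_le_of_perm w π fun i => not_not.1 fun hi =>
      hπ i (Quotient.sound (Or.inr (Adj.symm hi)))
    omega
  refine ⟨_, hq, fun i hi j => ?_⟩
  rw [Finset.mem_filter_univ] at hi ⊢
  rw [← hi, eq_comm, Quotient.eq]
  rfl

/-- `P` is, near the vertex `w`, a bundle whose fibre is the unimodular simplex spanned by the
edge directions in `S`. -/
structure IsSimplexClass (w : ι) (S : Finset (Fin n)) : Prop where
  len_eq : ∀ i ∈ S, D.len w i = 1
  slope_eq : ∀ i ∈ S, ∀ j, D.slope w i j = if j ∈ S then -1 else 0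

lemma len_eq_one_of_large_adj_class {w : ι} (hcd : n + 3 ≤ 2 * codeg P) {S : Finset (Fin n)}
    (hS : n < 2 * S.card) (hadj : ∀ i ∈ S, ∀ j, j ∈ S ↔ i = j ∨ D.Adj w i j) {i : Fin n}
    (hi : i ∈ S) : D.len w i = 1 := by
  by_cases hex : ∃ j ∈ S, i ≠ j
  · obtain ⟨j, hj, hij⟩ := hex
    exact (((hadj i hi j).1 hj).resolve_left hij).len_eq_one_left hij
  push Not at hex
  have hcard : S.card ≤ 1 :=
    Finset.card_le_one.2 fun x hx y hy => (hex x hx).symm.trans (hex y hy)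
  have : Subsingleton (Fin n) := Fin.subsingleton_iff_le_one.2 (by omega)
  by_contra hne
  have hlen : 2 ≤ D.len w i := by
    have := D.len_pos w i
    omega
  have := D.two_mul_codeg_le_of_perm w 1 fun j => by
    rw [Equiv.Perm.one_apply, Subsingleton.elim j i, ← two_smul ℝ]
    exact D.smul_edge_mem_centered w i zero_le_two (by exact_mod_cast hlen)
  omega

lemma isSimplexClass_of_large_adj_class {w : ι} (hcd : n + 3 ≤ 2 * codeg P) {S : Finset (Fin n)}
    (hS : n < 2 * S.card) (hadj : ∀ i ∈ S, ∀ j, j ∈ S ↔ i = j ∨ D.Adj w i j) :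
    D.IsSimplexClass w S := by
  have hlen := fun i hi => D.len_eq_one_of_large_adj_class hcd hS hadj (i := i) hi
  have hrow : ∀ i ∈ S, ∀ j ∈ S, D.slope w i = D.slope w j := fun i hi j hj => by
    by_cases hij : i = j
    · rw [hij]
    · exact (((hadj i hi j).1 hj).resolve_left hij).slope_row_eq hij
  have hnot : ∀ i ∈ S, ∀ j ∉ S, ¬D.Adj w i j := fun i hi j hj hij =>
    hj ((hadj i hi j).2 (Or.inr hij))
  refine ⟨hlen, fun i hi j => ?_⟩
  split_ifs with hj
  · rw [hrow i hi j hj, slope_self]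
  have hint := D.slope_mem_intSubring w i j
  have hne (k : Fin n) (hk : k ∈ S) : k ≠ j := fun h => hj (h ▸ hk)
  have hneg : ¬D.slope w i j < 0 := fun hlt => by
    have hge := D.neg_len_le_slope w (hne i hi)
    rw [hlen i hi, Nat.cast_one] at hge
    have hle := add_one_le_of_mem_intSubring hint (zero_mem _) hlt
    exact hnot i hi j hj (Adj.of_slope_eq (hlen i hi) (by linarith))
  have hpos : ¬0 < D.slope w i j := fun hlt => by
    have := D.two_mul_codeg_le_of_two_smul_add_mem w hS hnot hj fun k hk =>
      D.smul_add_mem_centered w zero_le_two (hne k hk) (by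
        rw [hlen k hk, hrow k hk i hi, Nat.cast_one]
        linarith [one_le_of_mem_intSubring hint hlt])
    omega
  exact le_antisymm (not_lt.1 hpos) (not_lt.1 hneg)

variable {D} in
lemma IsSimplexClass.mul_card_add_one_le {w : ι} {S : Finset (Fin n)} (h : D.IsSimplexClass w S)
    (hS : S.Nonempty) {x : Fin n → ℝ} {s : ℝ} (hx : ∀ v i, s ≤ D.height v i x) :
    s * (S.card + 1) ≤ 1 := by
  obtain ⟨i, hi⟩ := hS
  have hfar : s ≤ D.oppHeight w i x := hx _ _
  rw [oppHeight_eq, h.len_eq i hi] at hfar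
  simp only [h.slope_eq i hi, mul_ite, mul_neg, mul_one, mul_zero, Finset.sum_ite_mem,
    Finset.univ_inter, Finset.sum_neg_distrib, Nat.cast_one] at hfar
  have hnear := Finset.card_nsmul_le_sum S (D.height w · x) s fun j _ => hx w j
  rw [nsmul_eq_mul] at hnear
  linarith

lemma exists_isSimplexClass (w : ι) (hcd : n + 3 ≤ 2 * codeg P) :
    ∃ S : Finset (Fin n), S.Nonempty ∧ S.card + 1 = codeg P ∧ D.IsSimplexClass w S := by
  obtain ⟨S, hS, hadj⟩ := D.exists_large_adj_class w hcd
  have hclass := D.isSimplexClass_of_large_adj_class hcd hS hadj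
  have hne : S.Nonempty := Finset.card_pos.1 (by omega)
  refine ⟨S, hne, le_antisymm ?_ ?_, hclass⟩
  · obtain ⟨x, hx⟩ := D.exists_inv_codeg_le_height
    have h := hclass.mul_card_add_one_le hne hx
    have hpos : (0 : ℝ) < codeg P := by exact_mod_cast D.codeg_spec.1
    rw [inv_mul_le_iff₀ hpos, mul_one] at h
    exact_mod_cast h
  · exact D.codeg_le_card_add_one w hS.le fun i hi j hj hij => hj ((hadj i hi j).2 (Or.inr hij))

/-! ### Shifted vertices and the nef value -/

/-- The vertex over `w` of the adjoint polytope `P^(s)`, as long as `P^(s)` has the same normal fan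
as `P`. -/
def shiftedVertex (w : ι) (s : ℝ) : Fin n → ℝ := D.vertex w + s • ∑ i, D.edge w i

/-- The anticanonical degree `-K · C` of the torus curve `C` of the edge `i` at `w`. -/
def anticanDegree (w : ι) (i : Fin n) : ℝ := 1 - ∑ j, D.slope w i j

/-- The degree `(L + sK) · C` on the torus curve `C` of the edge `i` at `w`: the signed lattice
length of the corresponding edge of `P^(s)`. -/
def shiftedLen (w : ι) (i : Fin n) (s : ℝ) : ℝ := D.len w i - s * D.anticanDegree w i

lemma height_shiftedVertex (w : ι) (i : Fin n) (s : ℝ) :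
    D.height w i (D.shiftedVertex w s) = s := by
  rw [shiftedVertex, height_vertex_add, map_smul, coord_sum_edge, smul_eq_mul, mul_one]

lemma oppHeight_add_smul_edge (w : ι) (i j : Fin n) (x : Fin n → ℝ) (t : ℝ) :
    D.oppHeight w i (x + t • D.edge w j) = D.oppHeight w i x + t * D.slope w i j := by
  rw [oppHeight, height_add, map_smul, smul_eq_mul]
  rfl

lemma shiftedVertex_nbr (w : ι) (i : Fin n) (s : ℝ) :
    D.shiftedVertex (D.nbr w i) s = D.shiftedVertex w s + D.shiftedLen w i s • D.edge w i := by
  set x := D.shiftedVertex (D.nbr w i) s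
  have hx : x = D.shiftedVertex w s + (D.height w i x - s) • D.edge w i := by
    refine D.eq_of_height_eq w fun j => ?_
    rw [height_add, height_shiftedVertex, map_smul, smul_eq_mul]
    rcases eq_or_ne j i with rfl | hj
    · rw [coord_basis_self]
      ring
    · obtain ⟨k, -, hk⟩ := exists_coord_eq (D.height_vertex_nbr w hj)
      rw [coord_basis_of_ne _ hj, ← hk, height_shiftedVertex, mul_zero, add_zero]
  have hopp : D.oppHeight w i x = s := D.height_shiftedVertex _ _ _
  rw [hx, oppHeight_add_smul_edge, slope_self, oppHeight_eq] at hopp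
  simp only [height_shiftedVertex, ← Finset.mul_sum] at hopp
  rw [hx, shiftedLen, anticanDegree]
  congr 2
  linarith

lemma exists_coord_edge_neg {v w : ι} {k : Fin n} (h : 0 < D.height v k (D.vertex w)) :
    ∃ i, (D.edge v).coord k (D.edge w i) < 0 := by
  by_contra! hcon
  have hsum := D.height_eq_add_sum v w k (D.vertex v)
  have := Finset.sum_nonneg fun i (_ : i ∈ Finset.univ) =>
    mul_nonneg (D.height_nonneg w i (D.vertex_mem v)) (hcon i)
  rw [height_vertex] at hsum
  linarith

/-- Among the vertices whose shift violates the inequality, one of minimal height would have a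
lower neighbour, which also violates it. -/
lemma le_height_shiftedVertex {s : ℝ} (hs : ∀ w i, 0 ≤ D.shiftedLen w i s) (v : ι) (k : Fin n)
    (w : ι) : s ≤ D.height v k (D.shiftedVertex w s) := by
  by_contra! hw
  have := D.finite
  obtain ⟨u, hu, hmin⟩ := Set.exists_min_image {u | D.height v k (D.shiftedVertex u s) < s}
    (fun u => D.height v k (D.vertex u)) (Set.toFinite _) ⟨w, hw⟩
  rcases (D.height_nonneg v k (D.vertex_mem u)).eq_or_lt with h0 | h0
  · obtain ⟨i, -, hi⟩ := exists_coord_eq h0.symm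
    rw [Set.mem_ofPred_eq, ← hi, height_shiftedVertex] at hu
    exact hu.false
  obtain ⟨i, hi⟩ := D.exists_coord_edge_neg h0
  have hbad : D.height v k (D.shiftedVertex (D.nbr u i) s) < s := by
    rw [shiftedVertex_nbr, height_add, map_smul, smul_eq_mul]
    exact (add_le_of_nonpos_right (mul_nonpos_of_nonneg_of_nonpos (hs u i) hi.le)).trans_lt hu
  have hle := hmin _ hbad
  rw [D.vertex_nbr, height_add, map_smul, smul_eq_mul] at hle
  linarith [mul_neg_of_pos_of_neg (D.len_cast_pos u i) hi]

lemma neg_one_le_slope_of_shiftedLen_eq_zero {s : ℝ} (hs : ∀ w i, 0 ≤ D.shiftedLen w i s) {w : ι}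
    {i : Fin n} (hi : D.shiftedLen w i s = 0)
    (hmin : ∀ j, D.shiftedLen w j s = 0 → D.len w i ≤ D.len w j) (j : Fin n) :
    -1 ≤ D.slope w i j := by
  by_contra! hlt
  have hopp : D.oppHeight w i (D.shiftedVertex w s) = s := by
    have := D.shiftedVertex_nbr w i s
    rw [hi, zero_smul, add_zero] at this
    rw [← this]
    exact D.height_shiftedVertex _ _ _
  have hshift : s ≤ D.oppHeight w i (D.shiftedVertex (D.nbr w j) s) :=
    D.le_height_shiftedVertex hs _ _ _
  rw [shiftedVertex_nbr, oppHeight_add_smul_edge, hopp] at hshift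
  have hj : D.shiftedLen w j s = 0 := le_antisymm (by nlinarith) (hs w j)
  have hlen : (D.len w i : ℝ) ≤ D.len w j := by exact_mod_cast hmin j hj
  have hvert := D.oppHeight_nonneg w i (D.vertex_mem (D.nbr w j))
  rw [D.vertex_nbr, oppHeight_add_smul_edge, oppHeight_vertex] at hvert
  nlinarith [D.len_cast_pos w j]

lemma anticanDegree_le_card {w : ι} {i : Fin n} (h : ∀ j, -1 ≤ D.slope w i j) :
    D.anticanDegree w i ≤ (Finset.univ.filter (D.slope w i · = -1)).card + 1 := by
  have hterm (j : Fin n) : (if D.slope w i j = -1 then -1 else 0) ≤ D.slope w i j := by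
    split_ifs with hj
    · exact hj.ge
    · have := add_one_le_of_mem_intSubring (neg_mem (one_mem _)) (D.slope_mem_intSubring w i j)
        (lt_of_le_of_ne (h j) (Ne.symm hj))
      linarith
  have hsum := Finset.sum_le_sum fun j (_ : j ∈ Finset.univ) => hterm j
  rw [← Finset.sum_filter, Finset.sum_const, nsmul_eq_mul] at hsum
  rw [anticanDegree]
  linarith

variable {D} in
lemma IsSimplexClass.card_slope_eq_neg_one_le {w : ι} {S : Finset (Fin n)}
    (h : D.IsSimplexClass w S) (hS : n ≤ 2 * S.card) {i : Fin n} (hi : D.len w i = 1) :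
    (Finset.univ.filter (D.slope w i · = -1)).card ≤ S.card := by
  by_cases hiS : i ∈ S
  · refine Finset.card_le_card fun j hj => ?_
    by_contra hjS
    rw [Finset.mem_filter_univ, h.slope_eq i hiS, if_neg hjS] at hj
    norm_num at hj
  · have hsub : Finset.univ.filter (D.slope w i · = -1) ⊆ Sᶜ := fun j hj => by
      rw [Finset.mem_filter_univ] at hj
      refine Finset.mem_compl.2 fun hjS => ?_
      have := (Adj.of_slope_eq hi hj).symm.slope_eq (ne_of_mem_of_not_mem hjS hiS)
      rw [h.slope_eq j hjS, if_neg hiS] at this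
      norm_num at this
    have := Finset.card_le_card hsub
    rw [Finset.card_compl, Fintype.card_fin] at this
    omega

lemma anticanDegree_le_of_neg_one_le_slope (hcd : n + 3 ≤ 2 * codeg P) {w : ι} {i : Fin n}
    (h : ∀ j, -1 ≤ D.slope w i j) : D.anticanDegree w i ≤ codeg P * D.len w i := by
  refine (D.anticanDegree_le_card h).trans ?_
  suffices (Finset.univ.filter (D.slope w i · = -1)).card + 1 ≤ codeg P * D.len w i by
    exact_mod_cast this
  rcases (D.len_pos w i).eq_or_lt with hlen | hlen
  · obtain ⟨S, -, hcard, hS⟩ := D.exists_isSimplexClass w hcd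
    have := hS.card_slope_eq_neg_one_le (by omega) hlen.symm
    rw [← hlen]
    omega
  · have := Finset.card_le_univ (Finset.univ.filter (D.slope w i · = -1))
    rw [Fintype.card_fin] at this
    nlinarith

/-- The value `s` is the inverse of the nef value, attained on the edge `i` at `w`. -/
lemma exists_shiftedLen_eq_zero {w₀ : ι} {i₀ : Fin n} (h : 0 < D.anticanDegree w₀ i₀) :
    ∃ s, 0 < s ∧ (∀ w i, 0 ≤ D.shiftedLen w i s) ∧ ∃ w i, D.shiftedLen w i s = 0 ∧
      ∀ j, D.shiftedLen w j s = 0 → D.len w i ≤ D.len w j := by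
  have := D.finite
  have : Nonempty (ι × Fin n) := ⟨(w₀, i₀)⟩
  obtain ⟨⟨w, i⟩, hmax⟩ :=
    Finite.exists_max fun q : ι × Fin n => D.anticanDegree q.1 q.2 / D.len q.1 q.2
  have hdeg : 0 < D.anticanDegree w i :=
    (div_pos_iff_of_pos_right (D.len_cast_pos w i)).1
      ((div_pos h (D.len_cast_pos w₀ i₀)).trans_le (hmax (w₀, i₀)))
  have hlen := D.len_cast_pos w i
  set s := D.len w i / D.anticanDegree w i with hs
  have hwi : D.shiftedLen w i s = 0 := by
    rw [shiftedLen, hs, div_mul_cancel₀ _ hdeg.ne', sub_self]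
  obtain ⟨j, hj, hmin⟩ := Finset.exists_min_image
    (Finset.univ.filter fun j => D.shiftedLen w j s = 0) (D.len w)
    ⟨i, (Finset.mem_filter_univ i).2 hwi⟩
  simp only [Finset.mem_filter_univ] at hj hmin
  refine ⟨s, div_pos hlen hdeg, fun v k => ?_, w, j, hj, hmin⟩
  have hvk := (div_le_div_iff₀ (D.len_cast_pos v k) hlen).1 (hmax (v, k))
  rw [shiftedLen, sub_nonneg, hs, div_mul_eq_mul_div, div_le_iff₀ hdeg]
  linarith

lemma anticanDegree_le (hcd : n + 3 ≤ 2 * codeg P) (w : ι) (i : Fin n) :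
    D.anticanDegree w i ≤ codeg P * D.len w i := by
  rcases le_or_gt (D.anticanDegree w i) 0 with h | h
  · exact h.trans (by positivity)
  obtain ⟨s, hs, hnonneg, v, k, hvk, hmin⟩ := D.exists_shiftedLen_eq_zero h
  have hext := D.anticanDegree_le_of_neg_one_le_slope hcd
    (D.neg_one_le_slope_of_shiftedLen_eq_zero hnonneg hvk hmin)
  have hone : 1 ≤ s * codeg P := by
    rw [shiftedLen, sub_eq_zero] at hvk
    refine le_of_mul_le_mul_right ?_ (D.len_cast_pos v k)
    rw [one_mul, mul_assoc]
    exact hvk.le.trans (mul_le_mul_of_nonneg_left hext hs.le)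
  have hwi := hnonneg w i
  rw [shiftedLen, sub_nonneg] at hwi
  calc D.anticanDegree w i ≤ s * codeg P * D.anticanDegree w i := le_mul_of_one_le_left h.le hone
    _ = codeg P * (s * D.anticanDegree w i) := by ring
    _ ≤ codeg P * D.len w i := mul_le_mul_of_nonneg_left hwi (Nat.cast_nonneg _)

lemma shiftedVertex_zero (w : ι) : D.shiftedVertex w 0 = D.vertex w := by
  rw [shiftedVertex, zero_smul, add_zero]

lemma shiftedLen_zero_pos (w : ι) (i : Fin n) : 0 < D.shiftedLen w i 0 := by
  rw [shiftedLen, zero_mul, sub_zero]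
  exact D.len_cast_pos w i

/-! ### Facets and adjoint polytopes -/

/-- The functional `f` lies in the cone of the vertex `w` in the (inner) normal fan of `P`. -/
def InNormalCone (w : ι) (f : (Fin n → ℝ) →ₗ[ℝ] ℝ) : Prop := ∀ i, 0 ≤ f (D.edge w i)

lemma exists_inNormalCone (f : (Fin n → ℝ) →ₗ[ℝ] ℝ) : ∃ w, D.InNormalCone w f := by
  obtain ⟨w, hw⟩ := D.exists_vertex_forall_le f
  refine ⟨w, fun i => ?_⟩
  have := hw _ (D.edge_mem_centered w i)
  rwa [map_add, le_add_iff_nonneg_right] at this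

lemma map_eq_map_shiftedVertex_add_sum (f : (Fin n → ℝ) →ₗ[ℝ] ℝ) (w : ι) (s : ℝ)
    (x : Fin n → ℝ) :
    f x = f (D.shiftedVertex w s) + ∑ i, (D.height w i x - s) * f (D.edge w i) := by
  rw [D.map_eq_add_sum f w x, shiftedVertex, map_add, map_smul, map_sum, smul_eq_mul,
    Finset.mul_sum]
  simp only [sub_mul, Finset.sum_sub_distrib]
  ring

section NormalCone

variable {D} {w : ι} {f : (Fin n → ℝ) →ₗ[ℝ] ℝ} {s : ℝ} {x : Fin n → ℝ}

lemma InNormalCone.map_shiftedVertex_le (hf : D.InNormalCone w f) (hx : ∀ i, s ≤ D.height w i x) :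
    f (D.shiftedVertex w s) ≤ f x := by
  rw [D.map_eq_map_shiftedVertex_add_sum f w s x, le_add_iff_nonneg_right]
  exact Finset.sum_nonneg fun i _ => mul_nonneg (sub_nonneg.2 (hx i)) (hf i)

lemma InNormalCone.map_eq_iff (hf : D.InNormalCone w f) (hx : ∀ i, s ≤ D.height w i x) :
    f x = f (D.shiftedVertex w s) ↔ ∀ i, 0 < f (D.edge w i) → D.height w i x = s := by
  rw [D.map_eq_map_shiftedVertex_add_sum f w s x, add_eq_left, Finset.sum_eq_zero_iff_of_nonneg
    fun i _ => mul_nonneg (sub_nonneg.2 (hx i)) (hf i)]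
  refine forall_congr' fun i => ?_
  rw [mul_eq_zero, sub_eq_zero, (hf i).lt_iff_ne, ne_comm]
  simp only [Finset.mem_univ, true_implies]
  tauto

end NormalCone

lemma vectorSpan_facet (w : ι) (i : Fin n) :
    vectorSpan ℝ {x ∈ P | D.height w i x = 0} = LinearMap.ker ((D.edge w).coord i) := by
  refine le_antisymm (vectorSpan_le_ker (c := (D.edge w).coord i (D.vertex w)) fun x hx => ?_)
    fun x hx => ?_
  · exact sub_eq_zero.1 ((map_sub _ x (D.vertex w)).symm.trans hx.2)
  rw [← (D.edge w).sum_repr x]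
  refine Submodule.sum_mem _ fun j _ => ?_
  rcases eq_or_ne j i with rfl | hj
  · rw [← Module.Basis.coord_apply, LinearMap.mem_ker.1 hx, zero_smul]
    exact Submodule.zero_mem _
  refine Submodule.smul_mem _ _ ?_
  have hfar : D.vertex w + D.edge w j ∈ {x ∈ P | D.height w i x = 0} :=
    ⟨D.edge_mem_centered w j, by rw [height_vertex_add, coord_basis_of_ne _ hj.symm]⟩
  simpa using vsub_mem_vectorSpan ℝ hfar ⟨D.vertex_mem w, D.height_vertex w i⟩

lemma exists_isFacetIneq (w : ι) (i : Fin n) :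
    ∃ a b, IsFacetIneq P a b ∧ ∀ x, iprod a x - b = D.height w i x := by
  obtain ⟨a, ha, hai⟩ := (D.isLatticeBasis_edge w).exists_isPrimitive_iprodHom_eq_coord i
  have hheight (x : Fin n → ℝ) : iprod a x - iprod a (D.vertex w) = D.height w i x := by
    rw [height, ← hai, map_sub]
    rfl
  have hfacet : {x ∈ P | iprod a x = iprod a (D.vertex w)} = {x ∈ P | D.height w i x = 0} := by
    simp only [← hheight, sub_eq_zero]
  refine ⟨a, _, ⟨ha, fun x hx => ?_, ⟨D.vertex w, D.vertex_mem w, rfl⟩, ?_⟩, hheight⟩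
  · rw [← sub_nonneg, hheight]
    exact D.height_nonneg w i hx
  · rw [hfacet, vectorSpan_facet, finrank_ker_coord]

lemma exists_height_eq_of_isFacetIneq {a : Fin n → ℤ} {b : ℝ} (h : IsFacetIneq P a b) :
    ∃ w i, ∀ x, iprod a x - b = D.height w i x := by
  obtain ⟨ha, hmin, ⟨x₀, hx₀, hx₀b⟩, hrank⟩ := h
  obtain ⟨w, hw⟩ := D.exists_inNormalCone (iprodHom a)
  have hwb : iprodHom a (D.vertex w) = b := by
    refine le_antisymm ?_ (hmin _ (D.vertex_mem w))
    rw [← hx₀b, ← shiftedVertex_zero]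
    exact hw.map_shiftedVertex_le fun i => D.height_nonneg w i hx₀
  have hker : ∀ i, iprodHom a (D.edge w i) ≠ 0 →
      vectorSpan ℝ {x ∈ P | iprod a x = b} = LinearMap.ker ((D.edge w).coord i) := by
    intro i hi
    have hsub : {x ∈ P | iprod a x = b} ⊆ {x ∈ P | D.height w i x = 0} := fun x hx =>
      ⟨hx.1, (hw.map_eq_iff fun i => D.height_nonneg w i hx.1).1
        (by rw [shiftedVertex_zero, hwb, ← hx.2, iprodHom_apply]) i ((hw i).lt_of_ne' hi)⟩
    exact Submodule.eq_of_le_of_finrank_eq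
      ((vectorSpan_mono ℝ hsub).trans (D.vectorSpan_facet w i).le)
      (by rw [hrank, finrank_ker_coord])
  obtain ⟨i, hi⟩ : ∃ i, iprodHom a (D.edge w i) ≠ 0 := by
    by_contra! hcon
    refine ha.1 (funext fun j => ?_)
    have hzero : iprodHom a = 0 := (D.edge w).ext hcon
    have := iprodHom_single a j
    rw [hzero, LinearMap.zero_apply] at this
    exact Int.cast_eq_zero.1 this.symm
  have hcoord := (D.isLatticeBasis_edge w).iprodHom_eq_coord ha (hw i) fun j hj => by
    by_contra hne
    have hmem : D.edge w j ∈ LinearMap.ker ((D.edge w).coord i) :=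
      coord_basis_of_ne _ hj.symm
    rw [← hker i hi, hker j hne, LinearMap.mem_ker, coord_basis_self] at hmem
    exact one_ne_zero hmem
  refine ⟨w, i, fun x => ?_⟩
  rw [height, ← hcoord, map_sub, hwb, iprodHom_apply]

lemma mem_adjointPoly {s : ℝ} {x : Fin n → ℝ} :
    x ∈ adjointPoly P s ↔ ∀ w i, s ≤ D.height w i x := by
  constructor
  · intro h w i
    obtain ⟨a, b, hab, hx⟩ := D.exists_isFacetIneq w i
    rw [← hx, le_sub_iff_add_le']
    exact h a b hab
  · intro h a b hab
    obtain ⟨w, i, hx⟩ := D.exists_height_eq_of_isFacetIneq hab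
    rw [← le_sub_iff_add_le', hx]
    exact h w i

include D in
lemma adjointPoly_zero : adjointPoly P 0 = P :=
  Set.ext fun _ => D.mem_adjointPoly.trans
    ⟨D.mem_of_height_nonneg, fun hx w i => D.height_nonneg w i hx⟩

/-! ### Normal fans of adjoint polytopes -/

section NormalFan

variable {s : ℝ} (hs : ∀ w i, 0 < D.shiftedLen w i s)
include hs

lemma shiftedVertex_mem_adjointPoly (w : ι) : D.shiftedVertex w s ∈ adjointPoly P s :=
  D.mem_adjointPoly.2 fun v k => D.le_height_shiftedVertex (fun w i => (hs w i).le) v k w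

lemma inNormalCone_iff {w : ι} {f : (Fin n → ℝ) →ₗ[ℝ] ℝ} :
    D.InNormalCone w f ↔ ∀ y ∈ adjointPoly P s, f (D.shiftedVertex w s) ≤ f y := by
  refine ⟨fun h y hy => h.map_shiftedVertex_le (D.mem_adjointPoly.1 hy w), fun h i => ?_⟩
  have := h _ (D.shiftedVertex_mem_adjointPoly hs (D.nbr w i))
  rw [shiftedVertex_nbr, map_add, map_smul, smul_eq_mul, le_add_iff_nonneg_right] at this
  exact nonneg_of_mul_nonneg_right this (hs w i)

end NormalFan

variable {D} in
lemma InNormalCone.map_edge_pos_iff {w : ι} {f : (Fin n → ℝ) →ₗ[ℝ] ℝ} (hf : D.InNormalCone w f)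
    (i : Fin n) : 0 < f (D.edge w i) ↔ ¬D.InNormalCone (D.nbr w i) f := by
  refine ⟨fun h hnbr => ?_, fun h => (hf i).lt_of_ne' fun h0 => h ?_⟩
  · have := hnbr (D.back w i)
    rw [D.edge_back, map_neg] at this
    linarith
  · rw [D.inNormalCone_iff D.shiftedLen_zero_pos] at hf ⊢
    rwa [shiftedVertex_nbr, map_add, map_smul, h0, smul_zero, add_zero]

variable {D} in
lemma InNormalCone.forall_map_le_iff {s : ℝ} (hs : ∀ w i, 0 < D.shiftedLen w i s) {w : ι}
    {f : (Fin n → ℝ) →ₗ[ℝ] ℝ} (hf : D.InNormalCone w f) {x : Fin n → ℝ}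
    (hx : x ∈ adjointPoly P s) :
    (∀ y ∈ adjointPoly P s, f x ≤ f y) ↔
      ∀ i, ¬D.InNormalCone (D.nbr w i) f → D.height w i x = s := by
  have hle := (D.inNormalCone_iff hs).1 hf
  have hmin : (∀ y ∈ adjointPoly P s, f x ≤ f y) ↔ f x = f (D.shiftedVertex w s) :=
    ⟨fun h => le_antisymm (h _ (D.shiftedVertex_mem_adjointPoly hs w)) (hle x hx),
      fun h y hy => h.trans_le (hle y hy)⟩
  simp only [hmin, hf.map_eq_iff (D.mem_adjointPoly.1 hx w), hf.map_edge_pos_iff]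

/-- The right-hand side does not depend on `s`, so that `P^(s)` has the same normal fan as `P`. -/
lemma minimizers_eq_iff {s : ℝ} (hs : ∀ w i, 0 < D.shiftedLen w i s)
    (f g : (Fin n → ℝ) →ₗ[ℝ] ℝ) :
    {x ∈ adjointPoly P s | ∀ y ∈ adjointPoly P s, f x ≤ f y} =
        {x ∈ adjointPoly P s | ∀ y ∈ adjointPoly P s, g x ≤ g y} ↔
      ∀ w, D.InNormalCone w f ↔ D.InNormalCone w g := by
  constructor
  · intro h w
    have := Set.ext_iff.1 h (D.shiftedVertex w s)
    simpa only [D.inNormalCone_iff hs, Set.mem_ofPred_eq, D.shiftedVertex_mem_adjointPoly hs w,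
      true_and] using this
  · intro h
    obtain ⟨w, hw⟩ := D.exists_inNormalCone f
    ext x
    refine and_congr_right fun hx => ?_
    simp only [hw.forall_map_le_iff hs hx, ((h w).1 hw).forall_map_le_iff hs hx, h]

lemma normEquiv_adjointPoly {s : ℝ} (hs : ∀ w i, 0 < D.shiftedLen w i s) :
    NormEquiv (adjointPoly P s) P := by
  intro f g
  have hP := D.minimizers_eq_iff D.shiftedLen_zero_pos f g
  rw [D.adjointPoly_zero] at hP
  rw [D.minimizers_eq_iff hs, hP]

include D in
lemma not_normEquiv_empty (hn : 0 < n) : ¬NormEquiv ∅ P := by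
  intro h
  obtain ⟨w⟩ := D.nonempty
  have heq := (h ((D.edge w).coord ⟨0, hn⟩) 0).1 (by simp only [Set.mem_empty_iff_false, false_and])
  have hmem : D.vertex w + D.edge w ⟨0, hn⟩ ∈
      {x ∈ P | ∀ y ∈ P, (D.edge w).coord ⟨0, hn⟩ x ≤ (D.edge w).coord ⟨0, hn⟩ y} := by
    rw [heq]
    exact ⟨D.edge_mem_centered w _, fun _ _ => le_rfl⟩
  have := hmem.2 _ (D.vertex_mem w)
  rw [map_add, coord_basis_self] at this
  linarith

include D in
lemma tauSet_subset_muSet (hn : 0 < n) : tauSet P ⊆ muSet P := by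
  rintro s ⟨hs, h⟩
  refine ⟨hs, Set.nonempty_iff_ne_empty.2 fun hempty => ?_⟩
  rw [hempty] at h
  exact D.not_normEquiv_empty hn h

/-! ### The two invariants -/

include D in
lemma isGreatest_muSet (hcd : n + 3 ≤ 2 * codeg P) : IsGreatest (muSet P) (codeg P : ℝ)⁻¹ := by
  have hpos : (0 : ℝ) < codeg P := by exact_mod_cast D.codeg_spec.1
  constructor
  · obtain ⟨x, hx⟩ := D.exists_inv_codeg_le_height
    exact ⟨inv_pos.2 hpos, x, D.mem_adjointPoly.2 hx⟩
  · rintro s ⟨-, x, hx⟩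
    obtain ⟨w⟩ := D.nonempty
    obtain ⟨S, hS, hcard, hclass⟩ := D.exists_isSimplexClass w hcd
    have hcard' : (S.card : ℝ) + 1 = codeg P := by exact_mod_cast hcard
    have := hclass.mul_card_add_one_le hS (D.mem_adjointPoly.1 hx)
    rwa [hcard', ← le_div_iff₀ hpos, one_div] at this

include D in
lemma Ioo_subset_tauSet (hcd : n + 3 ≤ 2 * codeg P) :
    Set.Ioo 0 (codeg P : ℝ)⁻¹ ⊆ tauSet P := by
  rintro s ⟨h0, h1⟩
  have hpos : (0 : ℝ) < codeg P := by exact_mod_cast D.codeg_spec.1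
  rw [← one_div, lt_div_iff₀ hpos] at h1
  refine ⟨h0, D.normEquiv_adjointPoly fun w i => sub_pos.2 ?_⟩
  calc s * D.anticanDegree w i ≤ s * (codeg P * D.len w i) :=
        mul_le_mul_of_nonneg_left (D.anticanDegree_le hcd w i) h0.le
    _ = s * codeg P * D.len w i := (mul_assoc _ _ _).symm
    _ < D.len w i := mul_lt_of_lt_one_left (D.len_cast_pos w i) h1

include D in
lemma tauSet_nonempty (hcd : n + 3 ≤ 2 * codeg P) : (tauSet P).Nonempty :=
  (Set.nonempty_Ioo.2 (D.isGreatest_muSet hcd).1.1).mono (D.Ioo_subset_tauSet hcd)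

include D in
lemma isLUB_tauSet (hcd : n + 3 ≤ 2 * codeg P) : IsLUB (tauSet P) (codeg P : ℝ)⁻¹ := by
  have hpos : (0 : ℝ) < (codeg P : ℝ)⁻¹ := (D.isGreatest_muSet hcd).1.1
  obtain ⟨w⟩ := D.nonempty
  obtain ⟨S, ⟨i, -⟩, -⟩ := D.exists_isSimplexClass w hcd
  exact ⟨upperBounds_mono_set (D.tauSet_subset_muSet i.pos) (D.isGreatest_muSet hcd).2,
    fun u hu => (isLUB_Ioo hpos).2 (upperBounds_mono_set (D.Ioo_subset_tauSet hcd) hu)⟩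

end SmoothCharts

/-! ### Edges of polytopes -/

section ExtremePoints

variable {E : Type*} [AddCommGroup E] [Module ℝ E] [TopologicalSpace E] [IsTopologicalAddGroup E]
  [ContinuousSMul ℝ E] [LocallyConvexSpace ℝ E] [T2Space E]

lemma eq_convexHull_of_extremePoints_subset {K Z : Set E} (hK : IsCompact K) (hconv : Convex ℝ K)
    (hZ : Z.Finite) (hZK : Z ⊆ K) (h : Set.extremePoints ℝ K ⊆ Z) : K = convexHull ℝ Z := by
  refine subset_antisymm ?_ (convexHull_min hZK hconv)
  rw [← closure_convexHull_extremePoints hK hconv]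
  exact closure_minimal (convexHull_mono h) (hZ.isClosed_convexHull ℝ)

lemma convexHull_eq_convexHull_extremePoints {Z : Set E} (hZ : Z.Finite) :
    convexHull ℝ Z = convexHull ℝ (Set.extremePoints ℝ (convexHull ℝ Z)) :=
  eq_convexHull_of_extremePoints_subset (hZ.isCompact_convexHull ℝ) (convex_convexHull ℝ Z)
    (hZ.subset extremePoints_convexHull_subset) extremePoints_subset subset_rfl

lemma right_mem_extremePoints_segment (x y : E) : y ∈ Set.extremePoints ℝ (segment ℝ x y) := by
  rw [← convexHull_pair]
  by_contra h
  have hsub : Set.extremePoints ℝ (convexHull ℝ {x, y}) ⊆ {x} := fun z hz =>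
    (extremePoints_convexHull_subset hz).resolve_right fun hzy => h (hzy ▸ hz)
  have hy : y ∈ convexHull ℝ {x, y} := subset_convexHull ℝ _ (Set.mem_insert_of_mem x rfl)
  rw [convexHull_eq_convexHull_extremePoints (Set.toFinite _)] at hy
  obtain rfl : y = x := by simpa using convexHull_mono hsub hy
  simp at h

lemma exists_lt_of_mem_extremePoints {Z : Set E} (hZ : Z.Finite) {z : E}
    (hz : z ∈ Set.extremePoints ℝ (convexHull ℝ Z)) :
    ∃ f : E →ₗ[ℝ] ℝ, ∀ y ∈ Z, y ≠ z → f z < f y := by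
  have hnot : z ∉ convexHull ℝ (Z \ {z}) := fun hmem =>
    (extremePoints_convexHull_subset (inter_extremePoints_subset_extremePoints_of_subset
      (convexHull_mono Set.sdiff_subset) ⟨hmem, hz⟩)).2 rfl
  obtain ⟨f, u, hfz, hf⟩ := geometric_hahn_banach_point_closed (convex_convexHull ℝ _)
    ((hZ.subset Set.sdiff_subset).isClosed_convexHull ℝ) hnot
  exact ⟨f.toLinearMap, fun y hy hne => hfz.trans (hf y (subset_convexHull ℝ _ ⟨hy, hne⟩))⟩

end ExtremePoints

lemma collinear_convexHull {E : Type*} [AddCommGroup E] [Module ℝ E] {A : Set E}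
    (h : Collinear ℝ A) : Collinear ℝ (convexHull ℝ A) := by
  rwa [Collinear, ← direction_affineSpan, affineSpan_convexHull, direction_affineSpan]

/-- `F` is an edge of `P` through `v`. -/
def IsEdgeAt {n : ℕ} (P : Set (Fin n → ℝ)) (v : Fin n → ℝ) (F : Set (Fin n → ℝ)) : Prop :=
  IsFace P F ∧ v ∈ F ∧ fdim F = 1

section Edges

variable {n : ℕ} {P F A : Set (Fin n → ℝ)} {v : Fin n → ℝ}

lemma IsFace.isExposed (h : IsFace P F) : IsExposed ℝ P F := by
  obtain ⟨⟨x₀, hx₀⟩, u, c, hc, rfl⟩ := h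
  refine fun _ => ⟨-u.toContinuousLinearMap, Set.ext fun x => and_congr_right fun hx => ?_⟩
  simp only [neg_apply, LinearMap.coe_toContinuousLinearMap', neg_le_neg_iff]
  exact ⟨fun h y hy => h.trans_le (hc y hy),
    fun h => le_antisymm (hx₀.2 ▸ h x₀ hx₀.1) (hc x hx)⟩

lemma IsFace.eq_convexHull_inter (hA : A.Finite) (h : IsFace (convexHull ℝ A) F) :
    F = convexHull ℝ (A ∩ F) :=
  eq_convexHull_of_extremePoints_subset (h.isExposed.isCompact (hA.isCompact_convexHull ℝ))
    (h.isExposed.convex (convex_convexHull ℝ A)) (hA.inter_of_left F) Set.inter_subset_right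
    fun _ hx => ⟨extremePoints_convexHull_subset
      (h.isExposed.isExtreme.extremePoints_subset_extremePoints hx), hx.1⟩

lemma isEdgeAt_of_collinear (hA : A.Finite) (hv : v ∈ A) {y : Fin n → ℝ} (hy : y ∈ A)
    (hyv : y ≠ v) {g : (Fin n → ℝ) →ₗ[ℝ] ℝ} (hg : ∀ x ∈ A, g v ≤ g x) (hgy : g y = g v)
    (hcol : Collinear ℝ {x ∈ A | g x = g v}) :
    IsEdgeAt (convexHull ℝ A) v {x ∈ convexHull ℝ A | g x = g v} := by
  have hsub := subset_convexHull ℝ A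
  have hvF : v ∈ {x ∈ convexHull ℝ A | g x = g v} := ⟨hsub hv, rfl⟩
  have hface : IsFace (convexHull ℝ A) {x ∈ convexHull ℝ A | g x = g v} :=
    ⟨⟨v, hvF⟩, g, g v, convexHull_min hg (convex_halfSpace_ge g.isLinear _), rfl⟩
  refine ⟨hface, hvF, le_antisymm (collinear_iff_finrank_le_one.1 ?_) ?_⟩
  · have hsub : A ∩ {x ∈ convexHull ℝ A | g x = g v} ⊆ {x ∈ A | g x = g v} :=
      fun x hx => ⟨hx.1, hx.2.2⟩
    rw [hface.eq_convexHull_inter hA]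
    exact collinear_convexHull (hcol.subset hsub)
  · rw [fdim, Submodule.one_le_finrank_iff, Ne, vectorSpan_eq_bot_iff_subsingleton]
    exact fun h => hyv (h ⟨hsub hy, hgy⟩ hvF)

/-- The section at level one of the cone spanned by `A - v`, with respect to a functional `f`
with `f v < f y` for all other `y ∈ A`. Its extreme points are the edges of the convex hull of `A`
at `v`. -/
def vertexFigure (f : (Fin n → ℝ) →ₗ[ℝ] ℝ) (A : Set (Fin n → ℝ)) (v : Fin n → ℝ) :
    Set (Fin n → ℝ) :=
  (fun y => (f y - f v)⁻¹ • (y - v)) '' (A \ {v})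

lemma finite_vertexFigure (f : (Fin n → ℝ) →ₗ[ℝ] ℝ) (hA : A.Finite) (v : Fin n → ℝ) :
    (vertexFigure f A v).Finite :=
  (hA.subset Set.sdiff_subset).image _

lemma map_sub_eq_mul_map_inv_smul (f g : (Fin n → ℝ) →ₗ[ℝ] ℝ) {y : Fin n → ℝ} (h : f v < f y) :
    g y - g v = (f y - f v) * g ((f y - f v)⁻¹ • (y - v)) := by
  rw [map_smul, map_sub, smul_eq_mul, mul_inv_cancel_left₀ (sub_pos.2 h).ne']

lemma map_eq_one_of_mem_vertexFigure {f : (Fin n → ℝ) →ₗ[ℝ] ℝ}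
    (hf : ∀ y ∈ A, y ≠ v → f v < f y) {z : Fin n → ℝ} (hz : z ∈ vertexFigure f A v) :
    f z = 1 := by
  obtain ⟨y, ⟨hy, hyv⟩, rfl⟩ := hz
  simp only [map_smul, map_sub, smul_eq_mul]
  exact inv_mul_cancel₀ (sub_pos.2 (hf y hy hyv)).ne'

lemma exists_isEdgeAt_of_mem_extremePoints (hA : A.Finite) (hv : v ∈ A)
    {f : (Fin n → ℝ) →ₗ[ℝ] ℝ} (hf : ∀ y ∈ A, y ≠ v → f v < f y) {z : Fin n → ℝ}
    (hz : z ∈ Set.extremePoints ℝ (convexHull ℝ (vertexFigure f A v))) :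
    ∃ F, IsEdgeAt (convexHull ℝ A) v F ∧ ∃ y ∈ F, f v < f y ∧ z = (f y - f v)⁻¹ • (y - v) := by
  obtain ⟨k, hk⟩ := exists_lt_of_mem_extremePoints (finite_vertexFigure f hA v) hz
  have hzfig := extremePoints_convexHull_subset hz
  obtain ⟨y₀, ⟨hy₀, hy₀v⟩, hz₀ : (f y₀ - f v)⁻¹ • (y₀ - v) = z⟩ := id hzfig
  let g : (Fin n → ℝ) →ₗ[ℝ] ℝ := k - k z • f
  have hgfig : ∀ u ∈ vertexFigure f A v, g u = k u - k z := fun u hu => by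
    simp only [g, LinearMap.sub_apply, LinearMap.smul_apply, smul_eq_mul,
      map_eq_one_of_mem_vertexFigure hf hu, mul_one]
  have hcases : ∀ y ∈ A, g v < g y ∨ g y = g v ∧ ∃ t : ℝ, y = t • z + v := fun y hy => by
    rcases eq_or_ne y v with rfl | hyv
    · exact .inr ⟨rfl, 0, by rw [zero_smul, zero_add]⟩
    have hlt := hf y hy hyv
    have hmem : (f y - f v)⁻¹ • (y - v) ∈ vertexFigure f A v := ⟨y, ⟨hy, hyv⟩, rfl⟩
    have hgy := map_sub_eq_mul_map_inv_smul f g hlt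
    rw [hgfig _ hmem] at hgy
    rcases eq_or_ne ((f y - f v)⁻¹ • (y - v)) z with h | h
    · refine .inr ⟨?_, f y - f v, ?_⟩
      · rwa [h, sub_self, mul_zero, sub_eq_zero] at hgy
      · rw [← h, smul_inv_smul₀ (sub_pos.2 hlt).ne', sub_add_cancel]
    · exact .inl (sub_pos.1 (hgy ▸ mul_pos (sub_pos.2 hlt) (sub_pos.2 (hk _ hmem h))))
  have hy₀g : g y₀ = g v := by
    rw [← sub_eq_zero, map_sub_eq_mul_map_inv_smul f g (hf y₀ hy₀ hy₀v), hz₀, hgfig z hzfig,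
      sub_self, mul_zero]
  have hvmem : v ∈ {y ∈ A | g y = g v} := ⟨hv, rfl⟩
  have hcol := (collinear_iff_of_mem (k := ℝ) hvmem).2
    ⟨z, fun y hy => ((hcases y hy.1).resolve_left hy.2.not_gt).2⟩
  have hmin : ∀ y ∈ A, g v ≤ g y := fun y hy => (hcases y hy).elim le_of_lt fun h => h.1.ge
  exact ⟨_, isEdgeAt_of_collinear hA hv hy₀ hy₀v hmin hy₀g hcol, y₀,
    ⟨subset_convexHull ℝ A hy₀, hy₀g⟩, hf y₀ hy₀ hy₀v, hz₀.symm⟩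

/-- The optimality criterion of the simplex method. -/
lemma map_le_of_forall_isEdgeAt (hA : A.Finite) (hv : v ∈ Set.extremePoints ℝ (convexHull ℝ A))
    {h : (Fin n → ℝ) →ₗ[ℝ] ℝ}
    (hedge : ∀ F, IsEdgeAt (convexHull ℝ A) v F → ∀ y ∈ F, h v ≤ h y) :
    ∀ x ∈ convexHull ℝ A, h v ≤ h x := by
  have hvA := extremePoints_convexHull_subset hv
  obtain ⟨f, hf⟩ := exists_lt_of_mem_extremePoints hA hv
  have hfigure : convexHull ℝ (vertexFigure f A v) ⊆ {z | 0 ≤ h z} := by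
    rw [convexHull_eq_convexHull_extremePoints (finite_vertexFigure f hA v)]
    refine convexHull_min (fun z hz => ?_) (convex_halfSpace_ge h.isLinear 0)
    obtain ⟨F, hF, y, hy, hlt, rfl⟩ := exists_isEdgeAt_of_mem_extremePoints hA hvA hf hz
    rw [Set.mem_ofPred_eq, map_smul, map_sub]
    exact smul_nonneg (inv_pos.2 (sub_pos.2 hlt)).le (sub_nonneg.2 (hedge F hF y hy))
  suffices hsub : A ⊆ {x | h v ≤ h x} from
    convexHull_min hsub (convex_halfSpace_ge h.isLinear (h v))
  intro y hy
  rcases eq_or_ne y v with rfl | hyv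
  · exact le_refl (h y)
  have hlt := hf y hy hyv
  rw [Set.mem_ofPred_eq, ← sub_nonneg, map_sub_eq_mul_map_inv_smul f h hlt]
  exact mul_nonneg (sub_pos.2 hlt).le
    (hfigure (subset_convexHull ℝ _ ⟨y, ⟨hy, hyv⟩, rfl⟩))

end Edges

/-! ### Charts of a smooth lattice polytope -/

/-- `b` is a lattice basis consisting of the edge directions of `P` at the vertex `v`, and the
`i`-th edge has length `c i` in units of `b i`. -/
structure IsEdgeBasis {n : ℕ} (P : Set (Fin n → ℝ)) (v : Fin n → ℝ)
    (b : Module.Basis (Fin n) ℝ (Fin n → ℝ)) (c : Fin n → ℝ) : Prop where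
  isLatticeBasis : IsLatticeBasis b
  len_pos (i : Fin n) : 0 < c i
  isEdgeAt_iff (F : Set (Fin n → ℝ)) :
    IsEdgeAt P v F ↔ ∃ i, F = segment ℝ v (v + c i • b i)

lemma IsSmoothPoly.exists_isEdgeBasis {n : ℕ} {P : Set (Fin n → ℝ)} (hsm : IsSmoothPoly P)
    (hfull : affineSpan ℝ P = ⊤) {v : Fin n → ℝ} (hv : v ∈ Set.extremePoints ℝ P) :
    ∃ b c, IsEdgeBasis P v b c := by
  have hspan : vectorSpan ℝ P = ⊤ := by
    rw [← direction_affineSpan, hfull, AffineSubspace.direction_top]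
  have hdim : fdim P = n := by rw [fdim, hspan, finrank_top, Module.finrank_fin_fun]
  have hvertex := hsm v hv
  rw [hdim] at hvertex
  obtain ⟨e, c, hc, -, hli, -, hlat, hedges⟩ := hvertex
  let b := basisOfLinearIndependentOfCardEqFinrank' _ hli (by simp)
  have hb (i : Fin n) : b i = fun j => (e i j : ℝ) :=
    congr_fun (coe_basisOfLinearIndependentOfCardEqFinrank' _ hli _) i
  refine ⟨b, c, ⟨fun i j => ⟨e i j, by rw [hb]⟩, fun i z hz => ?_⟩, hc, fun F => ?_⟩
  · choose y hy using hz
    obtain ⟨m, hm⟩ := hlat y (hspan ▸ Submodule.mem_top)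
    rw [← funext hy] at hm
    simp only [← hb] at hm
    rw [Module.Basis.coord_apply, hm, b.repr_sum_self]
    exact intCast_mem _ _
  · simp only [hb]
    exact hedges F

namespace IsEdgeBasis

variable {n : ℕ} {P A : Set (Fin n → ℝ)} {v : Fin n → ℝ}
  {b b' : Module.Basis (Fin n) ℝ (Fin n → ℝ)} {c c' : Fin n → ℝ}

lemma isEdgeAt (h : IsEdgeBasis P v b c) (i : Fin n) :
    IsEdgeAt P v (segment ℝ v (v + c i • b i)) :=
  (h.isEdgeAt_iff _).2 ⟨i, rfl⟩

lemma add_smul_mem_extremePoints (h : IsEdgeBasis P v b c) (i : Fin n) :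
    v + c i • b i ∈ Set.extremePoints ℝ P :=
  (h.isEdgeAt i).1.isExposed.isExtreme.extremePoints_subset_extremePoints
    (right_mem_extremePoints_segment _ _)

lemma coord_nonneg (h : IsEdgeBasis (convexHull ℝ A) v b c) (hA : A.Finite)
    (hv : v ∈ Set.extremePoints ℝ (convexHull ℝ A)) {x : Fin n → ℝ} (hx : x ∈ convexHull ℝ A)
    (i : Fin n) : 0 ≤ b.coord i (x - v) := by
  rw [map_sub, sub_nonneg]
  refine map_le_of_forall_isEdgeAt hA hv (fun F hF y hy => ?_) x hx
  obtain ⟨j, rfl⟩ := (h.isEdgeAt_iff F).1 hF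
  rw [segment_eq_image'] at hy
  obtain ⟨t, ht, rfl⟩ := hy
  rw [add_sub_cancel_left, map_add, map_smul, map_smul, coord_basis, le_add_iff_nonneg_right]
  refine smul_nonneg ht.1 (smul_nonneg (h.len_pos j).le ?_)
  split_ifs
  exacts [zero_le_one, le_rfl]

lemma exists_natCast_eq (h : IsEdgeBasis P v b c) (i : Fin n) (hv : IsLatticePt v)
    (hend : IsLatticePt (v + c i • b i)) : ∃ l : ℕ, 1 ≤ l ∧ c i = l := by
  have hlat : IsLatticePt (c i • b i) := by
    have := (latticePts n).sub_mem hend hv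
    rwa [add_sub_cancel_left] at this
  have hmem := h.isLatticeBasis.coord_mem i hlat
  rw [map_smul, coord_basis_self, smul_eq_mul, mul_one] at hmem
  obtain ⟨m, hm⟩ := mem_intSubring.1 hmem
  have hpos : 0 < m := by
    have := h.len_pos i
    rw [hm] at this
    exact_mod_cast this
  lift m to ℕ using hpos.le
  exact ⟨m, by exact_mod_cast hpos, by exact_mod_cast hm⟩

lemma exists_eq_neg (h : IsEdgeBasis P v b c) {i : Fin n}
    (h' : IsEdgeBasis P (v + c i • b i) b' c') : ∃ k, b' k = -b i := by
  obtain ⟨hface, -, hdim⟩ := h.isEdgeAt i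
  obtain ⟨k, hk⟩ := (h'.isEdgeAt_iff _).1 ⟨hface, right_mem_segment ℝ _ _, hdim⟩
  have hv : v ∈ segment ℝ (v + c i • b i) (v + c i • b i + c' k • b' k) :=
    hk ▸ left_mem_segment ℝ _ _
  rw [segment_eq_image'] at hv
  obtain ⟨t, ⟨ht, -⟩, hvt : v + c i • b i + t • (_ - _) = v⟩ := hv
  have hc := h.len_pos i
  have hzero : c i • b i + t • c' k • b' k = 0 := by
    rwa [add_sub_cancel_left, add_assoc, add_eq_left] at hvt
  have hbi : b i = (-((c i)⁻¹ * (t * c' k))) • b' k := by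
    rw [neg_smul, mul_smul, mul_smul, ← smul_neg, ← eq_neg_of_add_eq_zero_left hzero,
      inv_smul_smul₀ hc.ne']
  have ht' : 0 < t := ht.lt_of_ne' fun h0 => b.ne_zero i <| by
    rw [hbi, h0, zero_mul, mul_zero, neg_zero, zero_smul]
  have hneg : -((c i)⁻¹ * (t * c' k)) < 0 :=
    neg_neg_of_pos (mul_pos (inv_pos.2 hc) (mul_pos ht' (h'.len_pos k)))
  have := h.isLatticeBasis.eq_neg_of_eq_smul h'.isLatticeBasis hneg hbi
  exact ⟨k, (neg_eq_iff_eq_neg.2 this).symm⟩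

end IsEdgeBasis

lemma IsSmoothPoly.nonempty_smoothCharts {n : ℕ} {P : Set (Fin n → ℝ)} (hsm : IsSmoothPoly P)
    (hP : IsLatticePolytope P) (hfull : affineSpan ℝ P = ⊤) :
    Nonempty (SmoothCharts P (Set.extremePoints ℝ P)) := by
  obtain ⟨A, hA, rfl⟩ := hP
  set P := convexHull ℝ (A : Set (Fin n → ℝ))
  have hfin := A.finite_toSet
  have hlat (v : Set.extremePoints ℝ P) : IsLatticePt (v : Fin n → ℝ) :=
    hA v (extremePoints_convexHull_subset v.2)
  have hne : P.Nonempty := (affineSpan_nonempty (k := ℝ)).1 (hfull ▸ ⟨0, trivial⟩)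
  choose b c hbc using fun v : Set.extremePoints ℝ P => hsm.exists_isEdgeBasis hfull v.2
  let nbr (v : Set.extremePoints ℝ P) (i : Fin n) : Set.extremePoints ℝ P :=
    ⟨v + c v i • b v i, (hbc v).add_smul_mem_extremePoints i⟩
  choose len hlen hlenc using fun v i => (hbc v).exists_natCast_eq i (hlat v) (hlat (nbr v i))
  choose back hback using fun v i => (hbc v).exists_eq_neg (hbc (nbr v i))
  exact ⟨{
    vertex := (↑)
    edge := b
    len := len
    nbr := nbr
    back := back
    finite := (hfin.subset extremePoints_convexHull_subset).to_subtype
    nonempty := ((hfin.isCompact_convexHull ℝ).extremePoints_nonempty hne).to_subtype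
    eq_convexHull := by
      rw [Subtype.range_coe]
      exact convexHull_eq_convexHull_extremePoints hfin
    isLatticePt_vertex := hlat
    isLatticeBasis_edge v := (hbc v).isLatticeBasis
    len_pos := hlen
    vertex_nbr v i := by rw [← hlenc]
    edge_back := hback
    coord_nonneg v _ hx := (hbc v).coord_nonneg hfin v.2 hx }⟩

/-- A smooth full-dimensional lattice polytope `P ⊆ ℝ^n` satisfies
`cd(P) ≥ (n+3)/2` iff `μ(P) = τ(P) = cd(P)` and `cd(P) > n/2 + 1`. -/
theorem stmt12 {n : ℕ} (P : Set (Fin n → ℝ)) (hP : IsLatticePolytope P)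
    (hfull : affineSpan ℝ P = ⊤) (hsm : IsSmoothPoly P) :
    ((n : ℝ) + 3) / 2 ≤ (codeg P : ℝ) ↔
      ((sSup (muSet P))⁻¹ = (sSup (tauSet P))⁻¹ ∧
       (sSup (tauSet P))⁻¹ = (codeg P : ℝ) ∧
       (n : ℝ) / 2 + 1 < (codeg P : ℝ)) := by
  obtain ⟨D⟩ := hsm.nonempty_smoothCharts hP hfull
  rw [div_le_iff₀' two_pos]
  constructor
  · intro h
    have hcd : n + 3 ≤ 2 * codeg P := by exact_mod_cast h
    have hmu := (D.isGreatest_muSet hcd).csSup_eq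
    have htau := (D.isLUB_tauSet hcd).csSup_eq (D.tauSet_nonempty hcd)
    rw [hmu, htau, inv_inv]
    exact ⟨rfl, rfl, by linarith⟩
  · rintro ⟨-, -, h⟩
    have hcd : (n : ℝ) + 2 < 2 * codeg P := by linarith
    exact_mod_cast Nat.succ_le_of_lt (by exact_mod_cast hcd : n + 2 < 2 * codeg P)
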